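/- arXiv:1802.01931 — 3 statements merged into one kernel-verified Lean document; each statement's English description precedes it below -/
import Mathlib

section
/- Let τ: ℝ² → ℝ be a C² function satisfying Δ(-τ) = 4 e^{-2τ} on ℝ², τ(0) = 0, ∇τ(0) = 0, τ ≥ 0, and ∫_{ℝ²} e^{-2τ(y)} dy < ∞. Then τ(y) = log(1 + |y|²) for all y ∈ ℝ². -/
/-!
Put `w = e^τ` and `hop i j = ∂ᵢ∂ⱼτ + ∂ᵢτ ∂ⱼτ = e^{-τ} ∂ᵢ∂ⱼw`. The Liouville equation makes
`τ_zz + τ_z²`, whose real and imaginary parts are `hop 0 0 - hop 1 1` and `-2 hop 0 1` up to the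
factor `4`, a holomorphic function on the plane. If it vanishes identically, the Hessian of `w` is a
multiple of the identity, which forces `w = 1 + |y|²` with the given normalization (`endgame`). The
point is therefore a Liouville theorem for this function.

Since `τ` is only `C²`, holomorphy is used in weak form (`weak_cauchyRiemann`). Test functions come
from explicit radial bumps `phi lam z` of radius `lam^{-1/2}` about `z`, all of the same mass, and
compactly supported `C³` potentials `Pot lam mu z ≥ 0` with Laplacian `phi lam z - phi mu z`; here
and below the Laplacian is `∂₀∂₀ + ∂₁∂₁ = -posLap`.
Testing the Cauchy–Riemann equations with the first derivatives of `Pot` shows that the averages of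
`hop 0 0 - hop 1 1` and `hop 0 1` against `phi lam z` do not depend on `lam` (`hop_avg_eq`).

It remains to see that these averages tend to `0` as `lam → 0` (`hop_avg_le`, `eq_zero_of_avg`).
The function `τ` is subharmonic and its Laplacian has finite mass, so integrating against `Pot`
gives both the sub-mean value property and logarithmic growth of averages; hence `τ = O(t)` on the
disc of radius `t²` (`growth`). As `τ ≥ 0`, the function `τ²` controls the Dirichlet energy
(`energy_le`). Moving derivatives to the bump of radius `t²`, whose Hessian is `O(t⁻⁸)` on an area
`O(t⁴)`, the averages of `hop` are `O(t⁻²)`.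
-/

open Real MeasureTheory Filter Metric

noncomputable abbrev E2 := EuclideanSpace ℝ (Fin 2)

/-- The positive Laplacian `Δ = -(∂_xx + ∂_yy)` on `ℝ²`. -/
noncomputable def posLap (f : E2 → ℝ) (x : E2) : ℝ :=
  -(∑ i : Fin 2, iteratedDeriv 2 (fun t : ℝ => f (x + t • EuclideanSpace.single i (1 : ℝ))) 0)

/-! ### Partial derivatives and the equality case -/

/-- The partial derivative `∂ᵢ f`. -/
noncomputable def pd (i : Fin 2) (f : E2 → ℝ) (x : E2) : ℝ :=
  fderiv ℝ f x (EuclideanSpace.single i (1 : ℝ))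

lemma contDiff_pd {n m : WithTop ℕ∞} {f : E2 → ℝ} (hf : ContDiff ℝ n f) (h : m + 1 ≤ n)
    (i : Fin 2) : ContDiff ℝ m (pd i f) :=
  (hf.fderiv_right h).clm_apply contDiff_const

lemma hasCompactSupport_pd {f : E2 → ℝ} (hf : HasCompactSupport f) (i : Fin 2) :
    HasCompactSupport (pd i f) :=
  hf.fderiv_apply ℝ _

lemma pd_mul {f g : E2 → ℝ} (hf : ContDiff ℝ 1 f) (hg : ContDiff ℝ 1 g) (i : Fin 2) (x : E2) :
    pd i (fun y => f y * g y) x = f x * pd i g x + pd i f x * g x := by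
  unfold pd
  rw [fderiv_fun_mul (hf.differentiable one_ne_zero x) (hg.differentiable one_ne_zero x)]
  simp [mul_comm]

lemma pd_comm {f : E2 → ℝ} (hf : ContDiff ℝ 2 f) (i j : Fin 2) (x : E2) :
    pd i (pd j f) x = pd j (pd i f) x := by
  have hd : DifferentiableAt ℝ (fderiv ℝ f) x :=
    (hf.fderiv_right (m := 1) (by norm_num)).differentiable one_ne_zero x
  have key : ∀ k l : Fin 2, pd k (pd l f) x =
      fderiv ℝ (fderiv ℝ f) x (EuclideanSpace.single k 1) (EuclideanSpace.single l 1) := by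
    intro k l
    unfold pd
    rw [fderiv_clm_apply hd (differentiableAt_const _)]
    simp
  rw [key, key]
  exact (hf.contDiffAt.isSymmSndFDerivAt (by simp)) _ _

lemma integrable_mul_of_compact {f g : E2 → ℝ} (hf : Continuous f) (hg : Continuous g)
    (hc : HasCompactSupport g) : Integrable (fun x => f x * g x) :=
  (hf.mul hg).integrable_of_hasCompactSupport hc.mul_left

/-- Integration by parts; no boundary term appears because `g` has compact support. -/
lemma integral_mul_pd {f g : E2 → ℝ} (hf : ContDiff ℝ 1 f) (hg : ContDiff ℝ 1 g)
    (hc : HasCompactSupport g) (i : Fin 2) :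
    ∫ x, f x * pd i g x = -∫ x, pd i f x * g x := by
  have c1 : ∀ {f : E2 → ℝ}, ContDiff ℝ 1 f → Continuous (pd i f) := fun h =>
    (contDiff_pd h (m := 0) (by norm_num) i).continuous
  exact integral_mul_fderiv_eq_neg_fderiv_mul_of_integrable
    (integrable_mul_of_compact (c1 hf) hg.continuous hc)
    (integrable_mul_of_compact hf.continuous (c1 hg) (hasCompactSupport_pd hc i))
    (integrable_mul_of_compact hf.continuous hg.continuous hc)
    (fun x _ => hf.differentiable one_ne_zero x) (fun x _ => hg.differentiable one_ne_zero x)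

lemma iteratedDeriv_line {f : E2 → ℝ} (hf : ContDiff ℝ 2 f) (i : Fin 2) (x : E2) :
    iteratedDeriv 2 (fun t : ℝ => f (x + t • EuclideanSpace.single i (1 : ℝ))) 0
      = pd i (pd i f) x := by
  have line : ∀ {g : E2 → ℝ}, Differentiable ℝ g → ∀ t : ℝ,
      HasDerivAt (fun t : ℝ => g (x + t • EuclideanSpace.single i (1 : ℝ)))
        (pd i g (x + t • EuclideanSpace.single i (1 : ℝ))) t := by
    intro g hg t
    have h1 : HasDerivAt (fun t : ℝ => x + t • EuclideanSpace.single i (1 : ℝ))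
        (EuclideanSpace.single i (1 : ℝ) : E2) t := by
      simpa using ((hasDerivAt_id t).smul_const (EuclideanSpace.single i (1 : ℝ) : E2)).const_add x
    exact (hg _).hasFDerivAt.comp_hasDerivAt t h1
  have h1 : deriv (fun t : ℝ => f (x + t • EuclideanSpace.single i (1 : ℝ))) =
      fun t => pd i f (x + t • EuclideanSpace.single i (1 : ℝ)) :=
    funext fun t => (line (hf.differentiable two_ne_zero) t).deriv
  rw [iteratedDeriv_succ, iteratedDeriv_one, h1,
    (line ((contDiff_pd hf (m := 1) (by norm_num) i).differentiable one_ne_zero) 0).deriv]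
  simp

lemma pd_neg (f : E2 → ℝ) (i : Fin 2) : pd i (fun z => -f z) = fun z => -pd i f z := by
  funext x
  simp [pd, fderiv_fun_neg]

/-- The Liouville equation in the form `∂₀∂₀τ + ∂₁∂₁τ = 4 e^{-2τ}`: the sign of the positive
Laplacian cancels that of `-τ`. -/
lemma liouville_pd {τ : E2 → ℝ} (hτ : ContDiff ℝ 2 τ)
    (hpde : ∀ y, posLap (fun z => -τ z) y = 4 * Real.exp (-(2 * τ y))) (x : E2) :
    pd 0 (pd 0 τ) x + pd 1 (pd 1 τ) x = 4 * Real.exp (-(2 * τ x)) := by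
  rw [← hpde, posLap]
  simp only [iteratedDeriv_line hτ.neg, Fin.sum_univ_two, pd_neg]
  ring

lemma pd_exp {u : E2 → ℝ} (hu : ContDiff ℝ 1 u) (c : ℝ) (i : Fin 2) (x : E2) :
    pd i (fun y => Real.exp (c * u y)) x = c * pd i u x * Real.exp (c * u x) := by
  have h := ((hu.differentiable one_ne_zero x).hasFDerivAt.const_mul c).exp
  unfold pd
  rw [h.fderiv]
  simp
  ring

lemma clm_eq (L : E2 →L[ℝ] ℝ) (y : E2) :
    L y = y 0 * L (EuclideanSpace.single 0 1) + y 1 * L (EuclideanSpace.single 1 1) := by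
  have : y = y 0 • (EuclideanSpace.single 0 1 : E2) + y 1 • (EuclideanSpace.single 1 1 : E2) := by
    ext i; fin_cases i <;> simp
  conv_lhs => rw [this]
  simp

lemma eq_of_pd_eq_zero {f : E2 → ℝ} (hf : ContDiff ℝ 1 f) (h : ∀ i x, pd i f x = 0) (x y : E2) :
    f x = f y := by
  refine is_const_of_fderiv_eq_zero (𝕜 := ℝ) (hf.differentiable one_ne_zero) (fun z => ?_) x y
  ext v
  have h0 := h 0 z
  have h1 := h 1 z
  unfold pd at h0 h1
  rw [clm_eq, h0, h1]; simp

/-- Invariance of `f` under translation in a direction where its partial derivative vanishes. -/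
lemma shift_of_pd_eq_zero {f : E2 → ℝ} (hf : ContDiff ℝ 1 f) (i : Fin 2)
    (h : ∀ x, pd i f x = 0) (x : E2) (t : ℝ) :
    f (x + t • EuclideanSpace.single i (1 : ℝ)) = f x := by
  have line : ∀ t : ℝ, HasDerivAt (fun t : ℝ => f (x + t • EuclideanSpace.single i (1 : ℝ))) 0 t := by
    intro t
    have h1 : HasDerivAt (fun t : ℝ => x + t • EuclideanSpace.single i (1 : ℝ))
        (EuclideanSpace.single i (1 : ℝ) : E2) t := by
      simpa using ((hasDerivAt_id t).smul_const (EuclideanSpace.single i (1 : ℝ) : E2)).const_add x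
    have h2 := (hf.differentiable one_ne_zero _).hasFDerivAt.comp_hasDerivAt t h1
    have h3 := h (x + t • EuclideanSpace.single i (1 : ℝ))
    unfold pd at h3
    rwa [h3] at h2
  have := is_const_of_deriv_eq_zero (fun t => (line t).differentiableAt)
    (fun t => (line t).deriv) t 0
  simpa using this

lemma pd_shift (f : E2 → ℝ) (i : Fin 2) (v : E2) (h : ∀ x, f (x + v) = f x) (x : E2) :
    pd i f (x + v) = pd i f x := by
  unfold pd
  rw [← fderiv_comp_add_right]
  simp [h]

/-- If `∂ᵢ∂ⱼτ + ∂ᵢτ ∂ⱼτ` is everywhere a multiple of the identity, so is the Hessian of `w = e^τ`.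
Then `∂₀∂₀w = ∂₁∂₁w` is unchanged by translation in either variable, hence constant, equal to its
value `2` at the origin, and `w = 1 + |y|²`. -/
lemma endgame {τ : E2 → ℝ} (hτ : ContDiff ℝ 2 τ)
    (hpde : ∀ x, pd 0 (pd 0 τ) x + pd 1 (pd 1 τ) x = 4 * Real.exp (-(2 * τ x)))
    (h0 : τ 0 = 0) (hgrad : ∀ i, pd i τ 0 = 0)
    (h1 : ∀ x, pd 0 (pd 0 τ) x + pd 0 τ x * pd 0 τ x = pd 1 (pd 1 τ) x + pd 1 τ x * pd 1 τ x)
    (h2 : ∀ x, pd 0 (pd 1 τ) x + pd 0 τ x * pd 1 τ x = 0) (y : E2) :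
    τ y = Real.log (1 + ‖y‖ ^ 2) := by
  set w : E2 → ℝ := fun x => Real.exp (1 * τ x) with hw
  have hwC : ContDiff ℝ 2 w := (contDiff_const.mul hτ).exp
  have hτ1 : ContDiff ℝ 1 τ := hτ.of_le (by norm_num)
  have hw1 : ∀ i, pd i w = fun x => pd i τ x * w x := fun i => funext fun x => by
    rw [hw, pd_exp hτ1, one_mul]
  have hwiC : ∀ i, ContDiff ℝ 1 (pd i w) := fun i => contDiff_pd hwC (by norm_num) i
  have hw2 : ∀ i j x, pd i (pd j w) x = w x * (pd i (pd j τ) x + pd i τ x * pd j τ x) := by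
    intro i j x
    rw [hw1 j, pd_mul (contDiff_pd hτ (by norm_num) j) (hwC.of_le (by norm_num)), hw1 i]
    ring
  have e01 : ∀ x, pd 0 (pd 1 w) x = 0 := fun x => by rw [hw2, h2, mul_zero]
  have e10 : ∀ x, pd 1 (pd 0 w) x = 0 := fun x => by rw [pd_comm hwC, e01]
  have ediag : ∀ x, pd 0 (pd 0 w) x = pd 1 (pd 1 w) x := fun x => by rw [hw2, hw2, h1]
  -- `∂₁w` does not depend on the variable `0`, hence neither does `∂₁∂₁w`; likewise for `s1`
  have s0 : ∀ x (t : ℝ), pd 1 (pd 1 w) (x + t • EuclideanSpace.single 0 (1 : ℝ))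
      = pd 1 (pd 1 w) x := fun x t =>
    pd_shift _ _ _ (fun z => shift_of_pd_eq_zero (hwiC 1) 0 e01 z t) x
  have s1 : ∀ x (t : ℝ), pd 0 (pd 0 w) (x + t • EuclideanSpace.single 1 (1 : ℝ))
      = pd 0 (pd 0 w) x := fun x t =>
    pd_shift _ _ _ (fun z => shift_of_pd_eq_zero (hwiC 0) 1 e10 z t) x
  have w0 : w 0 = 1 := by simp [hw, h0]
  have d0 : pd 0 (pd 0 w) 0 = 2 := by
    have a := ediag 0
    rw [hw2, hw2, hgrad, hgrad, w0] at a
    have b := hpde 0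
    rw [h0] at b
    rw [hw2, hgrad, w0]
    norm_num at a b ⊢
    linarith
  have D0 : ∀ x, pd 0 (pd 0 w) x = 2 := by
    intro x
    have hx : x = (0 + x 0 • (EuclideanSpace.single 0 1 : E2))
        + x 1 • (EuclideanSpace.single 1 1 : E2) := by
      ext i; fin_cases i <;> simp
    rw [hx, s1, ediag, s0, ← ediag, d0]
  have D1 : ∀ x, pd 1 (pd 1 w) x = 2 := fun x => by rw [← ediag, D0]
  have hco : ∀ i j : Fin 2, ∀ x : E2, pd i (fun z : E2 => 2 * z j) x = if i = j then 2 else 0 := by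
    intro i j x
    have : HasFDerivAt (fun z : E2 => 2 * z j)
        ((2 : ℝ) • (EuclideanSpace.proj j : E2 →L[ℝ] ℝ)) x :=
      ((EuclideanSpace.proj j : E2 →L[ℝ] ℝ).hasFDerivAt).const_mul 2
    unfold pd
    rw [this.fderiv]
    simp [eq_comm]
  have hcoC : ∀ j : Fin 2, ContDiff ℝ 1 (fun z : E2 => 2 * z j) := fun j =>
    contDiff_const.mul (EuclideanSpace.proj j : E2 →L[ℝ] ℝ).contDiff
  have psub : ∀ {f g : E2 → ℝ}, ContDiff ℝ 1 f → ContDiff ℝ 1 g → ∀ i x,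
      pd i (fun z => f z - g z) x = pd i f x - pd i g x := by
    intro f g hf hg i x
    unfold pd
    rw [fderiv_fun_sub (hf.differentiable one_ne_zero x) (hg.differentiable one_ne_zero x)]
    simp
  have W : ∀ j x, pd j w x = 2 * x j := by
    intro j x
    have := eq_of_pd_eq_zero ((hwiC j).sub (hcoC j)) (fun i z => by
      rw [psub (hwiC j) (hcoC j), hco]
      fin_cases i <;> fin_cases j <;> simp [e01, e10, D0, D1]) x 0
    simp only [hw1, hgrad] at this
    rw [hw1]
    simp at this
    linarith
  have hnC : ContDiff ℝ 1 (fun z : E2 => ‖z‖ ^ 2) := contDiff_norm_sq ℝ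
  have hn : ∀ j (x : E2), pd j (fun z : E2 => ‖z‖ ^ 2) x = 2 * x j := by
    intro j x
    unfold pd
    rw [fderiv_norm_sq_apply]
    simp [EuclideanSpace.inner_single_right]
  have hfin := eq_of_pd_eq_zero ((hwC.of_le (by norm_num : (1 : WithTop ℕ∞) ≤ 2)).sub hnC)
    (fun i z => by
      rw [psub (hwC.of_le (by norm_num)) hnC, hn, W, sub_self]) y 0
  rw [w0] at hfin
  have : Real.exp (τ y) = 1 + ‖y‖ ^ 2 := by
    simp [hw] at hfin
    linarith
  rw [← this, Real.log_exp]

/-! ### Radial profiles -/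

/-- Differentiability of a function glued at `1` from two pieces agreeing there to first order. -/
lemma hasDerivAt_glue {f g f' g' : ℝ → ℝ} (hf : ∀ t, HasDerivAt f (f' t) t)
    (hg : ∀ t, 0 < t → HasDerivAt g (g' t) t) (h : f 1 = g 1) (h' : f' 1 = g' 1) (t : ℝ) :
    HasDerivAt (fun s => if s ≤ 1 then f s else g s) (if t ≤ 1 then f' t else g' t) t := by
  rcases lt_trichotomy t 1 with ht | rfl | ht
  · rw [if_pos ht.le]
    refine (hf t).congr_of_eventuallyEq ?_
    filter_upwards [Iio_mem_nhds ht] with s hs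
    rw [if_pos (le_of_lt hs)]
  · rw [if_pos le_rfl, ← hasDerivWithinAt_univ, ← Set.Iic_union_Ici (a := (1 : ℝ))]
    refine HasDerivWithinAt.union ?_ ?_
    · exact (hf 1).hasDerivWithinAt.congr (fun s hs => if_pos hs) (if_pos le_rfl)
    · rw [h']
      refine (hg 1 one_pos).hasDerivWithinAt.congr (fun s hs => ?_) (by rw [if_pos le_rfl, h])
      rcases eq_or_lt_of_le (Set.mem_Ici.1 hs) with rfl | hs
      · rw [if_pos le_rfl, h]
      · rw [if_neg (not_le.2 hs)]
  · rw [if_neg (not_le.2 ht)]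
    refine (hg t (by linarith)).congr_of_eventuallyEq ?_
    filter_upwards [Ioi_mem_nhds ht] with s hs
    rw [if_neg (not_le.2 hs)]

lemma contDiff_succ_of_hasDerivAt {n : ℕ} {f f' : ℝ → ℝ} (h : ∀ t, HasDerivAt f (f' t) t)
    (h' : ContDiff ℝ n f') : ContDiff ℝ (n + 1 : ℕ) f := by
  have e : deriv f = f' := funext fun t => (h t).deriv
  push_cast
  rw [contDiff_succ_iff_deriv]
  exact ⟨fun t => (h t).differentiableAt, by simp, e ▸ h'⟩

/-- A function of class `C³` equal to `log` on `[1, ∞)`; on `(-∞, 1]` it is the fourth-order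
Taylor polynomial of `log` at `1`. -/
noncomputable def ell (s : ℝ) : ℝ :=
  if s ≤ 1 then -25 / 12 + 4 * s - 3 * s ^ 2 + 4 / 3 * s ^ 3 - s ^ 4 / 4 else Real.log s

/-- The derivative of `ell`. -/
noncomputable def ell1 (s : ℝ) : ℝ :=
  if s ≤ 1 then 4 - 6 * s + 4 * s ^ 2 - s ^ 3 else s⁻¹

/-- The second derivative of `ell`. -/
noncomputable def ell2 (s : ℝ) : ℝ :=
  if s ≤ 1 then -6 + 8 * s - 3 * s ^ 2 else -(s ^ 2)⁻¹

/-- The third derivative of `ell`. -/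
noncomputable def ell3 (s : ℝ) : ℝ :=
  if s ≤ 1 then 8 - 6 * s else 2 * s / (s ^ 2) ^ 2

lemma hasDerivAt_ell (t : ℝ) : HasDerivAt ell (ell1 t) t := by
  refine hasDerivAt_glue (f := fun s => -25 / 12 + 4 * s - 3 * s ^ 2 + 4 / 3 * s ^ 3 - s ^ 4 / 4)
    (f' := fun s => 4 - 6 * s + 4 * s ^ 2 - s ^ 3) (g' := fun s => s⁻¹) (fun t => ?_) (fun t ht => ?_)
    (by norm_num) (by norm_num) t
  · have := (((((hasDerivAt_id t).const_mul 4).const_add (-25 / 12)).sub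
      ((hasDerivAt_pow 2 t).const_mul 3)).add ((hasDerivAt_pow 3 t).const_mul (4 / 3))).sub
      ((hasDerivAt_pow 4 t).div_const 4)
    refine this.congr_deriv ?_
    norm_num; ring
  · exact Real.hasDerivAt_log ht.ne'

lemma hasDerivAt_ell1 (t : ℝ) : HasDerivAt ell1 (ell2 t) t := by
  refine hasDerivAt_glue (f := fun s => 4 - 6 * s + 4 * s ^ 2 - s ^ 3)
    (f' := fun s => -6 + 8 * s - 3 * s ^ 2) (g' := fun s => -(s ^ 2)⁻¹) (fun t => ?_) (fun t ht => ?_)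
    (by norm_num) (by norm_num) t
  · have := ((((hasDerivAt_id t).const_mul 6).const_sub 4).add
      ((hasDerivAt_pow 2 t).const_mul 4)).sub (hasDerivAt_pow 3 t)
    refine this.congr_deriv ?_
    norm_num; ring
  · exact hasDerivAt_inv ht.ne'

lemma hasDerivAt_ell2 (t : ℝ) : HasDerivAt ell2 (ell3 t) t := by
  refine hasDerivAt_glue (f := fun s => -6 + 8 * s - 3 * s ^ 2)
    (f' := fun s => 8 - 6 * s) (g := fun s => -(s ^ 2)⁻¹) (g' := fun s => 2 * s / (s ^ 2) ^ 2)
    (fun t => ?_) (fun t ht => ?_)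
    (by norm_num) (by norm_num) t
  · have := ((((hasDerivAt_id t).const_mul 8).const_add (-6)).sub
      ((hasDerivAt_pow 2 t).const_mul 3))
    refine this.congr_deriv ?_
    norm_num; ring
  · have := ((hasDerivAt_pow 2 t).fun_inv (by positivity)).fun_neg
    refine this.congr_deriv ?_
    norm_num; ring

lemma continuous_ell3 : Continuous ell3 := by
  have h : ell3 = fun s => if s ≤ 1 then 8 - 6 * s else 2 * max s 1 / (max s 1 ^ 2) ^ 2 := by
    funext s
    unfold ell3
    split_ifs with hs
    · rfl
    · rw [max_eq_left (not_le.1 hs).le]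
  rw [h]
  refine Continuous.if_le (by fun_prop) ?_ continuous_id continuous_const ?_
  · refine Continuous.div (by fun_prop) (by fun_prop) fun s => ?_
    have : (0 : ℝ) < max s 1 := lt_max_of_lt_right one_pos
    positivity
  · rintro s rfl
    norm_num

lemma contDiff_ell : ContDiff ℝ 3 ell := by
  have h3 : ContDiff ℝ (0 : ℕ) ell3 := contDiff_zero.2 continuous_ell3
  exact contDiff_succ_of_hasDerivAt hasDerivAt_ell
    (contDiff_succ_of_hasDerivAt hasDerivAt_ell1 (contDiff_succ_of_hasDerivAt hasDerivAt_ell2 h3))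

/-- The `C²` profile `4 (1 - t)₊³`, vanishing for `t ≥ 1`; it is the derivative of `t ↦ t * ell1 t`. -/
noncomputable def bump (t : ℝ) : ℝ := if t ≤ 1 then 4 * (1 - t) ^ 3 else 0

/-- The derivative of `bump`. -/
noncomputable def bump1 (t : ℝ) : ℝ := if t ≤ 1 then -12 * (1 - t) ^ 2 else 0

/-- The second derivative of `bump`. -/
noncomputable def bump2 (t : ℝ) : ℝ := if t ≤ 1 then 24 * (1 - t) else 0

lemma hasDerivAt_bump (t : ℝ) : HasDerivAt bump (bump1 t) t := by
  refine hasDerivAt_glue (f := fun s => 4 * (1 - s) ^ 3) (g := fun _ => 0)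
    (f' := fun s => -12 * (1 - s) ^ 2) (g' := fun _ => 0) (fun t => ?_)
    (fun t _ => hasDerivAt_const t 0) (by norm_num) (by norm_num) t
  have := (((hasDerivAt_id t).const_sub 1).fun_pow 3).const_mul 4
  refine this.congr_deriv ?_
  norm_num; ring

lemma hasDerivAt_bump1 (t : ℝ) : HasDerivAt bump1 (bump2 t) t := by
  refine hasDerivAt_glue (f := fun s => -12 * (1 - s) ^ 2) (g := fun _ => 0)
    (f' := fun s => 24 * (1 - s)) (g' := fun _ => 0) (fun t => ?_)
    (fun t _ => hasDerivAt_const t 0) (by norm_num) (by norm_num) t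
  have := (((hasDerivAt_id t).const_sub 1).fun_pow 2).const_mul (-12)
  refine this.congr_deriv ?_
  norm_num; ring

lemma contDiff_bump : ContDiff ℝ 2 bump := by
  have h3 : ContDiff ℝ (0 : ℕ) bump2 := by
    refine contDiff_zero.2 ?_
    refine Continuous.if_le (by fun_prop) continuous_const continuous_id continuous_const ?_
    rintro s rfl
    norm_num
  exact contDiff_succ_of_hasDerivAt hasDerivAt_bump (contDiff_succ_of_hasDerivAt hasDerivAt_bump1 h3)

/-- The Laplacian `∂₀∂₀ + ∂₁∂₁` of a radial function `g(|x|²)` is `4 d/dt (t dg/dt)` at `t = |x|²`;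
for `g = ell` this is four times the bump profile. -/
lemma bump_eq (t : ℝ) : ell1 t + t * ell2 t = bump t := by
  unfold ell1 ell2 bump
  split_ifs with h
  · ring
  · have : t ≠ 0 := by push Not at h; linarith
    field_simp
    ring

lemma bump_nonneg (t : ℝ) : 0 ≤ bump t := by
  unfold bump
  split_ifs with h
  · have : 0 ≤ 1 - t := by linarith
    positivity
  · rfl

lemma abs_bump1_le {t : ℝ} (h : 0 ≤ t) : |bump1 t| ≤ 12 := by
  unfold bump1
  split_ifs with h1
  · rw [abs_le]; constructor <;> nlinarith
  · simp

lemma abs_bump2_le {t : ℝ} (h : 0 ≤ t) : |bump2 t| ≤ 24 := by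
  unfold bump2
  split_ifs with h1
  · rw [abs_le]; constructor <;> linarith
  · simp

/-- Monotonicity of `lam ↦ ell (lam s) - log lam`, which gives the sign of the potential `pot`. -/
lemma ell_sub_log_anti {s lam mu : ℝ} (hs : 0 ≤ s) (hl : 0 < lam) (hm : lam ≤ mu) :
    ell (mu * s) - Real.log mu ≤ ell (lam * s) - Real.log lam := by
  have hd : ∀ c : ℝ, 0 < c → HasDerivAt (fun c => ell (c * s) - Real.log c)
      (ell1 (c * s) * s - c⁻¹) c := fun c hc => by
    have h := (hasDerivAt_ell (c * s)).comp c ((hasDerivAt_id c).mul_const s)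
    rw [one_mul] at h
    exact h.fun_sub (Real.hasDerivAt_log hc.ne')
  refine antitoneOn_of_deriv_nonpos (convex_Ioi (0 : ℝ))
    (fun c hc => (hd c hc).continuousAt.continuousWithinAt)
    (fun c hc => (hd c (by simpa using hc)).differentiableAt.differentiableWithinAt)
    (fun c hc => ?_) (Set.mem_Ioi.2 hl) (Set.mem_Ioi.2 (hl.trans_le hm)) hm
  rw [interior_Ioi, Set.mem_Ioi] at hc
  rw [(hd c hc).deriv]
  have key : ell1 (c * s) * (c * s) ≤ 1 := by
    unfold ell1
    have : 0 ≤ c * s := by positivity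
    split_ifs with h
    · have h4 : 0 ≤ (1 - c * s) ^ 4 := by positivity
      nlinarith [h4]
    · rw [inv_mul_cancel₀ (by push Not at h; linarith)]
  have : ell1 (c * s) * s - c⁻¹ = c⁻¹ * (ell1 (c * s) * (c * s) - 1) := by
    field_simp
  rw [this]
  exact mul_nonpos_of_nonneg_of_nonpos (by positivity) (by linarith)

lemma ell_bounds {t : ℝ} (h : 0 ≤ t) (h1 : t ≤ 1) : -3 ≤ ell t ∧ ell t ≤ 0 := by
  unfold ell
  rw [if_pos h1]
  have e : -25 / 12 + 4 * t - 3 * t ^ 2 + 4 / 3 * t ^ 3 - t ^ 4 / 4 =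
    -(1 - t) - (1 - t) ^ 2 / 2 - (1 - t) ^ 3 / 3 - (1 - t) ^ 4 / 4 := by ring
  rw [e]
  have a0 : 0 ≤ 1 - t := by linarith
  have a1 : 1 - t ≤ 1 := by linarith
  have b2 : (1 - t) ^ 2 ≤ 1 := pow_le_one₀ a0 a1
  have b3 : (1 - t) ^ 3 ≤ 1 := pow_le_one₀ a0 a1
  have b4 : (1 - t) ^ 4 ≤ 1 := pow_le_one₀ a0 a1
  have c2 : 0 ≤ (1 - t) ^ 2 := by positivity
  have c3 : 0 ≤ (1 - t) ^ 3 := by positivity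
  have c4 : 0 ≤ (1 - t) ^ 4 := by positivity
  constructor <;> linarith

lemma ell_of_one_le {t : ℝ} (h : 1 ≤ t) : ell t = Real.log t := by
  unfold ell
  split_ifs with h1
  · have : t = 1 := le_antisymm h1 h
    subst this; norm_num
  · rfl

/-- The radial profile `p` of the potential, which satisfies
`4 d/ds (s dp/ds) = 4 lam bump(lam s) - 4 mu bump(mu s)`. -/
noncomputable def pot (lam mu s : ℝ) : ℝ :=
  (ell (lam * s) - Real.log lam) - (ell (mu * s) - Real.log mu)

lemma pot_nonneg {s lam mu : ℝ} (hs : 0 ≤ s) (hl : 0 < lam) (hm : lam ≤ mu) :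
    0 ≤ pot lam mu s := by
  have := ell_sub_log_anti hs hl hm
  unfold pot; linarith

/-- Beyond `s = 1 / lam` both copies of `ell` are logarithms and cancel against the constants. -/
lemma pot_eq_zero {s lam mu : ℝ} (hl : 0 < lam) (hm : lam ≤ mu) (hs : 1 ≤ lam * s) :
    pot lam mu s = 0 := by
  have s0 : 0 < s := by
    by_contra h
    have := mul_nonpos_of_nonneg_of_nonpos hl.le (not_lt.1 h)
    linarith
  have hs' : 1 ≤ mu * s := hs.trans (by gcongr)
  unfold pot
  rw [ell_of_one_le hs, ell_of_one_le hs', Real.log_mul hl.ne' s0.ne',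
    Real.log_mul (hl.trans_le hm).ne' s0.ne']
  ring

lemma pot_le {s lam mu : ℝ} (hs : 0 ≤ s) (hl : 0 < lam) (hm : lam ≤ mu) :
    pot lam mu s ≤ Real.log (mu / lam) + 3 := by
  have hmu := hl.trans_le hm
  have hlog : 0 ≤ Real.log (mu / lam) := Real.log_nonneg ((one_le_div hl).2 hm)
  by_cases h : 1 ≤ lam * s
  · rw [pot_eq_zero hl hm h]; linarith
  · have h1 := (ell_bounds (by positivity) (not_le.1 h).le).2
    have h2 : -3 ≤ ell (mu * s) := by
      by_cases h' : 1 ≤ mu * s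
      · rw [ell_of_one_le h']; linarith [Real.log_nonneg h']
      · exact (ell_bounds (by positivity) (not_le.1 h').le).1
    rw [Real.log_div hmu.ne' hl.ne']
    unfold pot; linarith

/-- First partial derivatives of a radial function `x ↦ g(‖x - z‖²)`. -/
lemma pd_radial {g g' : ℝ → ℝ} (hg : ∀ t, HasDerivAt g (g' t) t) (z : E2) (i : Fin 2) (x : E2) :
    pd i (fun x => g (‖x - z‖ ^ 2)) x = 2 * (x i - z i) * g' (‖x - z‖ ^ 2) := by
  have h1 : HasFDerivAt (fun x : E2 => x - z) (ContinuousLinearMap.id ℝ E2) x :=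
    (hasFDerivAt_id x).sub_const z
  have h := (hg (‖x - z‖ ^ 2)).comp_hasFDerivAt x h1.norm_sq
  unfold pd
  rw [HasFDerivAt.fderiv (f := fun x => g (‖x - z‖ ^ 2)) h]
  simp [EuclideanSpace.inner_single_right]
  ring

/-- Second partial derivatives of a radial function `x ↦ g(‖x - z‖²)`. -/
lemma pd_pd_radial {g g' g'' : ℝ → ℝ} (hg : ∀ t, HasDerivAt g (g' t) t)
    (hg' : ∀ t, HasDerivAt g' (g'' t) t) (hC : ContDiff ℝ 1 g') (z : E2) (i j : Fin 2) (x : E2) :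
    pd i (pd j (fun x => g (‖x - z‖ ^ 2))) x =
      2 * (if i = j then 1 else 0) * g' (‖x - z‖ ^ 2)
        + 4 * (x i - z i) * (x j - z j) * g'' (‖x - z‖ ^ 2) := by
  have e : pd j (fun x => g (‖x - z‖ ^ 2)) = fun x => (2 * (x j - z j)) * g' (‖x - z‖ ^ 2) :=
    funext fun x => pd_radial hg z j x
  have hn : ContDiff ℝ 1 (fun x : E2 => ‖x - z‖ ^ 2) := (contDiff_id.sub contDiff_const).norm_sq ℝ
  have hj : HasFDerivAt (fun x : E2 => 2 * (x j - z j))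
      ((2 : ℝ) • (EuclideanSpace.proj j : E2 →L[ℝ] ℝ)) x :=
    (((EuclideanSpace.proj j : E2 →L[ℝ] ℝ).hasFDerivAt).sub_const (z j)).const_mul 2
  have hjC : ContDiff ℝ 1 (fun x : E2 => 2 * (x j - z j)) :=
    contDiff_const.mul ((EuclideanSpace.proj j : E2 →L[ℝ] ℝ).contDiff.sub contDiff_const)
  have hpj : pd i (fun x : E2 => 2 * (x j - z j)) x = 2 * (if i = j then 1 else 0) := by
    unfold pd
    rw [hj.fderiv]
    simp [eq_comm]
  have hgC : ContDiff ℝ 1 (fun x : E2 => g' (‖x - z‖ ^ 2)) := hC.comp hn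
  rw [e, pd_mul hjC hgC, pd_radial hg', hpj]
  ring

/-! ### Bump averages and their potentials -/

/-- The bump `4 lam (4 (1 - lam |x - z|²)₊³)`, whose integral does not depend on `lam` and `z`. -/
noncomputable def phi (lam : ℝ) (z x : E2) : ℝ := 4 * lam * bump (lam * ‖x - z‖ ^ 2)

/-- For `0 < lam ≤ mu`, a compactly supported nonnegative function with
`∂₀∂₀ Pot + ∂₁∂₁ Pot = phi lam - phi mu`. -/
noncomputable def Pot (lam mu : ℝ) (z x : E2) : ℝ := pot lam mu (‖x - z‖ ^ 2)

lemma contDiff_normSq {n : WithTop ℕ∞} (z : E2) : ContDiff ℝ n (fun x : E2 => ‖x - z‖ ^ 2) :=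
  (contDiff_id.sub contDiff_const).norm_sq ℝ

lemma contDiff_phi (lam : ℝ) (z : E2) : ContDiff ℝ 2 (phi lam z) :=
  contDiff_const.mul (contDiff_bump.comp (contDiff_const.mul (contDiff_normSq z)))

lemma contDiff_Pot (lam mu : ℝ) (z : E2) : ContDiff ℝ 3 (Pot lam mu z) :=
  ((contDiff_ell.comp (contDiff_const.mul (contDiff_normSq z))).sub contDiff_const).sub
    ((contDiff_ell.comp (contDiff_const.mul (contDiff_normSq z))).sub contDiff_const)

lemma one_le_of_not_mem {lam : ℝ} (hl : 0 < lam) {z x : E2}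
    (hx : x ∉ closedBall z (√lam)⁻¹) : 1 ≤ lam * ‖x - z‖ ^ 2 := by
  rw [mem_closedBall, dist_eq_norm, not_le] at hx
  have h0 : 0 < √lam := Real.sqrt_pos.2 hl
  have h1 : 1 ≤ √lam * ‖x - z‖ := by
    rw [inv_lt_iff_one_lt_mul₀' h0] at hx
    exact hx.le
  calc (1 : ℝ) ≤ (√lam * ‖x - z‖) ^ 2 := one_le_pow₀ h1
    _ = lam * ‖x - z‖ ^ 2 := by rw [mul_pow, Real.sq_sqrt hl.le]

lemma phi_nonneg {lam : ℝ} (hl : 0 < lam) (z x : E2) : 0 ≤ phi lam z x :=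
  mul_nonneg (by positivity) (bump_nonneg _)

lemma bump_eq_zero {t : ℝ} (h : 1 ≤ t) : bump t = 0 := by
  unfold bump
  split_ifs with h1
  · rw [le_antisymm h1 h]; norm_num
  · rfl

lemma phi_eq_zero {lam : ℝ} {z x : E2} (h : 1 ≤ lam * ‖x - z‖ ^ 2) : phi lam z x = 0 := by
  rw [phi, bump_eq_zero h, mul_zero]

lemma hasCompactSupport_phi {lam : ℝ} (hl : 0 < lam) (z : E2) : HasCompactSupport (phi lam z) :=
  HasCompactSupport.intro (isCompact_closedBall z (√lam)⁻¹)
    fun _ hx => phi_eq_zero (one_le_of_not_mem hl hx)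

lemma hasCompactSupport_Pot {lam mu : ℝ} (hl : 0 < lam) (hm : lam ≤ mu) (z : E2) :
    HasCompactSupport (Pot lam mu z) :=
  HasCompactSupport.intro (isCompact_closedBall z (√lam)⁻¹)
    fun _ hx => pot_eq_zero hl hm (one_le_of_not_mem hl hx)

lemma normSq_sub (x z : E2) : ‖x - z‖ ^ 2 = (x 0 - z 0) ^ 2 + (x 1 - z 1) ^ 2 := by
  simp [EuclideanSpace.norm_sq_eq]

lemma hasDerivAt_scale {f f' : ℝ → ℝ} (hf : ∀ t, HasDerivAt f (f' t) t) (c t : ℝ) :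
    HasDerivAt (fun s => f (c * s)) (c * f' (c * t)) t := by
  have := (hf (c * t)).comp t ((hasDerivAt_id t).const_mul c)
  rw [mul_one, mul_comm] at this
  exact this

lemma laplacian_Pot (lam mu : ℝ) (z x : E2) :
    pd 0 (pd 0 (Pot lam mu z)) x + pd 1 (pd 1 (Pot lam mu z)) x
      = phi lam z x - phi mu z x := by
  have h1 : ∀ t, HasDerivAt (pot lam mu) (lam * ell1 (lam * t) - mu * ell1 (mu * t)) t := fun t =>
    ((hasDerivAt_scale hasDerivAt_ell lam t).sub_const _).fun_sub ((hasDerivAt_scale hasDerivAt_ell mu t).sub_const _)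
  have h2 : ∀ t, HasDerivAt (fun t => lam * ell1 (lam * t) - mu * ell1 (mu * t))
      (lam * (lam * ell2 (lam * t)) - mu * (mu * ell2 (mu * t))) t := fun t =>
    ((hasDerivAt_scale hasDerivAt_ell1 lam t).const_mul _).fun_sub ((hasDerivAt_scale hasDerivAt_ell1 mu t).const_mul _)
  have h0 : ContDiff ℝ (0 : ℕ) ell2 := contDiff_zero.2
    (continuous_iff_continuousAt.2 fun t => (hasDerivAt_ell2 t).continuousAt)
  have hC : ContDiff ℝ 1 ell1 := contDiff_succ_of_hasDerivAt hasDerivAt_ell1 h0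
  have hC' : ContDiff ℝ 1 (fun t => lam * ell1 (lam * t) - mu * ell1 (mu * t)) :=
    (contDiff_const.mul (hC.comp (contDiff_const.mul contDiff_id))).sub
      (contDiff_const.mul (hC.comp (contDiff_const.mul contDiff_id)))
  have e : Pot lam mu z = fun x => pot lam mu (‖x - z‖ ^ 2) := rfl
  rw [e, pd_pd_radial h1 h2 hC', pd_pd_radial h1 h2 hC', phi, phi, ← bump_eq, ← bump_eq,
    if_pos rfl, if_pos rfl]
  have hs := normSq_sub x z
  generalize ‖x - z‖ ^ 2 = s at hs ⊢
  linear_combination (-4) * (lam * (lam * ell2 (lam * s)) - mu * (mu * ell2 (mu * s))) * hs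

/-- The Hessian of the bump is `O(lam²)`. -/
lemma abs_hess_phi_le {lam : ℝ} (hl : 0 < lam) (z : E2) (i j : Fin 2) (x : E2) :
    |pd i (pd j (phi lam z)) x| ≤ 480 * lam ^ 2 := by
  have h1 : ∀ t, HasDerivAt (fun t => 4 * lam * bump (lam * t))
      (4 * lam * (lam * bump1 (lam * t))) t :=
    fun t => (hasDerivAt_scale hasDerivAt_bump lam t).const_mul _
  have h2 : ∀ t, HasDerivAt (fun t => 4 * lam * (lam * bump1 (lam * t)))
      (4 * lam * (lam * (lam * bump2 (lam * t)))) t :=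
    fun t => ((hasDerivAt_scale hasDerivAt_bump1 lam t).const_mul lam).const_mul _
  have hC' : ContDiff ℝ 1 (fun t => 4 * lam * (lam * bump1 (lam * t))) := by
    have h : deriv (fun t => 4 * lam * bump (lam * t)) =
        fun t => 4 * lam * (lam * bump1 (lam * t)) := funext fun t => (h1 t).deriv
    rw [← h]
    exact (contDiff_succ_iff_deriv (n := 1).1
      (contDiff_const.mul (contDiff_bump.comp (contDiff_const.mul contDiff_id)))).2.2
  have e : phi lam z = fun x => 4 * lam * bump (lam * ‖x - z‖ ^ 2) := rfl
  rw [e, pd_pd_radial h1 h2 hC']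
  set s := ‖x - z‖ ^ 2 with hs
  have hs0 : 0 ≤ s := by positivity
  have hls : 0 ≤ lam * s := by positivity
  by_cases hb : lam * s ≤ 1
  · have c : ∀ k : Fin 2, |x k - z k| ≤ ‖x - z‖ := fun k => by
      simpa using PiLp.norm_apply_le (x - z) k
    have cc : |(x i - z i) * (x j - z j)| ≤ s := by
      rw [abs_mul, hs, sq]
      exact mul_le_mul (c i) (c j) (abs_nonneg _) (norm_nonneg _)
    have b1 := abs_bump1_le hls
    have b2 := abs_bump2_le hls
    have hd : |(2 * (if i = j then 1 else 0) : ℝ)| ≤ 2 := by split_ifs <;> norm_num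
    calc _ ≤ |2 * (if i = j then 1 else 0) * (4 * lam * (lam * bump1 (lam * s)))|
          + |4 * (x i - z i) * (x j - z j) * (4 * lam * (lam * (lam * bump2 (lam * s))))| :=
        abs_add_le _ _
      _ = 4 * lam ^ 2 * |(2 * (if i = j then 1 else 0) : ℝ)| * |bump1 (lam * s)|
          + 16 * lam ^ 2 * (lam * |(x i - z i) * (x j - z j)|) * |bump2 (lam * s)| := by
        simp only [abs_mul, abs_of_pos hl, abs_of_pos (four_pos : (0 : ℝ) < 4)]
        ring
      _ ≤ 4 * lam ^ 2 * 2 * 12 + 16 * lam ^ 2 * 1 * 24 := by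
        have : lam * |(x i - z i) * (x j - z j)| ≤ 1 :=
          (mul_le_mul_of_nonneg_left cc hl.le).trans hb
        gcongr
      _ = 480 * lam ^ 2 := by ring
  · rw [bump1, bump2, if_neg hb, if_neg hb]
    simp
    positivity

lemma hess_phi_eq_zero {lam : ℝ} (hl : 0 < lam) {z : E2} (i j : Fin 2) {x : E2}
    (hx : x ∉ closedBall z (√lam)⁻¹) : pd i (pd j (phi lam z)) x = 0 := by
  have h : ∀ y ∈ (closedBall z (√lam)⁻¹)ᶜ, phi lam z y = 0 :=
    fun y hy => phi_eq_zero (one_le_of_not_mem hl hy)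
  have ho : IsOpen (closedBall z (√lam)⁻¹)ᶜ := isClosed_closedBall.isOpen_compl
  have step : ∀ (f : E2 → ℝ) (k : Fin 2), (∀ y ∈ (closedBall z (√lam)⁻¹)ᶜ, f y = 0) →
      ∀ y ∈ (closedBall z (√lam)⁻¹)ᶜ, pd k f y = 0 := by
    intro f k hf y hy
    have : f =ᶠ[nhds y] fun _ => 0 := by
      filter_upwards [ho.mem_nhds hy] with w hw using hf w hw
    unfold pd
    rw [this.fderiv_eq]; simp
  exact step _ i (step _ j h) x hx

lemma integral_mul_laplacian {f g : E2 → ℝ} (hf : ContDiff ℝ 2 f) (hg : ContDiff ℝ 2 g)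
    (hc : HasCompactSupport g) (i j : Fin 2) :
    ∫ x, f x * pd i (pd j g) x = ∫ x, pd j (pd i f) x * g x := by
  rw [integral_mul_pd (hf.of_le (by norm_num)) (contDiff_pd hg (by norm_num) j)
    (hasCompactSupport_pd hc j), integral_mul_pd (contDiff_pd hf (by norm_num) i)
    (hg.of_le (by norm_num)) hc, neg_neg]

lemma continuous_pd_pd {f : E2 → ℝ} (hf : ContDiff ℝ 2 f) (i j : Fin 2) :
    Continuous (pd i (pd j f)) :=
  (contDiff_pd (contDiff_pd hf (m := 1) (by norm_num) j) (m := 0) (by norm_num) i).continuous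

/-- Difference of two bump averages of a `C²` function, in terms of its Laplacian. -/
lemma integral_phi_sub {f : E2 → ℝ} (hf : ContDiff ℝ 2 f) {lam mu : ℝ} (hl : 0 < lam)
    (hm : lam ≤ mu) (z : E2) :
    (∫ x, f x * phi lam z x) - ∫ x, f x * phi mu z x
      = ∫ x, (pd 0 (pd 0 f) x + pd 1 (pd 1 f) x) * Pot lam mu z x := by
  have hP : ContDiff ℝ 2 (Pot lam mu z) := (contDiff_Pot lam mu z).of_le (by norm_num)
  have hPc := hasCompactSupport_Pot hl hm z
  rw [← integral_sub
    (integrable_mul_of_compact hf.continuous (contDiff_phi _ _).continuous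
      (hasCompactSupport_phi hl z))
    (integrable_mul_of_compact hf.continuous (contDiff_phi _ _).continuous
      (hasCompactSupport_phi (hl.trans_le hm) z))]
  simp only [← mul_sub, ← laplacian_Pot, add_mul, mul_add]
  rw [integral_add, integral_add, integral_mul_laplacian hf hP hPc,
    integral_mul_laplacian hf hP hPc]
  · exact integrable_mul_of_compact (continuous_pd_pd hf _ _) hP.continuous hPc
  · exact integrable_mul_of_compact (continuous_pd_pd hf _ _) hP.continuous hPc
  · exact integrable_mul_of_compact hf.continuous (continuous_pd_pd hP _ _)
      (hasCompactSupport_pd (hasCompactSupport_pd hPc _) _)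
  · exact integrable_mul_of_compact hf.continuous (continuous_pd_pd hP _ _)
      (hasCompactSupport_pd (hasCompactSupport_pd hPc _) _)

/-- The mass of the bump depends neither on scale nor on centre: this is `integral_phi_sub` for
the constant function `1`, together with translation invariance. -/
lemma integral_phi {lam : ℝ} (hl : 0 < lam) (z : E2) : ∫ x, phi lam z x = ∫ x, phi 1 0 x := by
  have h : ∀ {lam mu : ℝ}, 0 < lam → lam ≤ mu → ∀ z, ∫ x, phi lam z x = ∫ x, phi mu z x := by
    intro lam mu hl hm z
    have := integral_phi_sub (f := fun _ => 1) contDiff_const hl hm z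
    have e : ∀ i x, pd i (fun _ : E2 => (1 : ℝ)) x = 0 := fun i x => by simp [pd]
    have e' : ∀ i x, pd i (pd i (fun _ : E2 => (1 : ℝ))) x = 0 := fun i x => by
      rw [show pd i (fun _ : E2 => (1 : ℝ)) = fun _ => 0 from funext (e i)]
      simp [pd]
    simp only [e', one_mul, add_zero, zero_mul, integral_zero] at this
    linarith
  have h1 : ∫ x, phi lam z x = ∫ x, phi 1 z x := by
    rcases le_total lam 1 with h' | h'
    · exact h hl h' z
    · exact (h one_pos h' z).symm
  rw [h1, ← integral_sub_right_eq_self (phi 1 0) z]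
  simp [phi]

lemma integral_phi_pos : 0 < ∫ x, phi 1 0 x := by
  refine (contDiff_phi 1 0).continuous.integral_pos_of_hasCompactSupport_nonneg_nonzero
    (hasCompactSupport_phi one_pos 0) (phi_nonneg one_pos 0) (x := 0) ?_
  simp [phi, bump]

/-- Bounds on all small-scale bump averages pass to the value at the centre. -/
lemma le_of_avg_le {f : E2 → ℝ} (hf : Continuous f) (z : E2) (K lam : ℝ)
    (h : ∀ mu, 0 < mu → lam ≤ mu → ∫ x, f x * phi mu z x ≤ K * ∫ x, phi 1 0 x) : f z ≤ K := by
  by_contra hlt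
  push Not at hlt
  obtain ⟨δ, hδ, hb⟩ := Metric.continuousAt_iff.1 hf.continuousAt (f z - K) (sub_pos.2 hlt)
  set mu := max (max 1 lam) (δ ^ 2)⁻¹ with hmu
  have mu1 : 1 ≤ mu := (le_max_left _ _).trans (le_max_left _ _)
  have mu0 : 0 < mu := by linarith
  have hcs := hasCompactSupport_phi mu0 z
  have hcont := (contDiff_phi mu z).continuous
  have hpos : 0 < ∫ x, (f x - K) * phi mu z x := by
    refine ((hf.sub continuous_const).mul hcont).integral_pos_of_hasCompactSupport_nonneg_nonzero
      hcs.mul_left (fun x => ?_) (x := z) ?_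
    · by_cases hx : dist x z < δ
      · have := (abs_lt.1 (by simpa [Real.dist_eq] using hb hx)).1
        exact mul_nonneg (by linarith) (phi_nonneg mu0 z x)
      · have : phi mu z x = 0 := phi_eq_zero <| by
          rw [dist_eq_norm, not_lt] at hx
          calc 1 = (δ ^ 2)⁻¹ * δ ^ 2 := by field_simp
            _ ≤ mu * ‖x - z‖ ^ 2 := by gcongr; exact le_max_right _ _
        simp [this]
    · refine mul_ne_zero (sub_pos.2 hlt).ne' ?_
      simp [phi, bump]
      exact mu0.ne'
  have := h mu mu0 ((le_max_right _ _).trans (le_max_left _ _))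
  simp only [sub_mul] at hpos
  rw [integral_sub (integrable_mul_of_compact hf hcont hcs)
    (integrable_mul_of_compact continuous_const hcont hcs), integral_const_mul,
    integral_phi mu0] at hpos
  linarith

/-! ### Weak holomorphy of `τ_zz + τ_z²` -/

/-- The tensor `∂ᵢ∂ⱼτ + ∂ᵢτ ∂ⱼτ`, which is `e^{-τ} ∂ᵢ∂ⱼ e^τ`. -/
noncomputable def hop (τ : E2 → ℝ) (i j : Fin 2) (x : E2) : ℝ :=
  pd i (pd j τ) x + pd i τ x * pd j τ x

lemma hop_comm {τ : E2 → ℝ} (hτ : ContDiff ℝ 2 τ) (i j : Fin 2) (x : E2) :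
    hop τ i j x = hop τ j i x := by
  unfold hop
  rw [pd_comm hτ, mul_comm]

lemma continuous_pd {f : E2 → ℝ} (hf : ContDiff ℝ 1 f) (i : Fin 2) : Continuous (pd i f) :=
  (contDiff_pd hf (m := 0) (by norm_num) i).continuous

lemma continuous_hop {τ : E2 → ℝ} (hτ : ContDiff ℝ 2 τ) (i j : Fin 2) : Continuous (hop τ i j) :=
  have hτ1 : ContDiff ℝ 1 τ := hτ.of_le (by norm_num)
  (continuous_pd_pd hτ i j).add ((continuous_pd hτ1 i).mul (continuous_pd hτ1 j))

/-- Integrable functions on the plane with vanishing integral. -/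
def ZeroMean (f : E2 → ℝ) : Prop := Integrable f ∧ ∫ x, f x = 0

lemma ZeroMean.add {f g : E2 → ℝ} (hf : ZeroMean f) (hg : ZeroMean g) :
    ZeroMean (fun x => f x + g x) :=
  ⟨hf.1.add hg.1, by rw [integral_add hf.1 hg.1, hf.2, hg.2, add_zero]⟩

lemma ZeroMean.sub {f g : E2 → ℝ} (hf : ZeroMean f) (hg : ZeroMean g) :
    ZeroMean (fun x => f x - g x) :=
  ⟨hf.1.sub hg.1, by rw [integral_sub hf.1 hg.1, hf.2, hg.2, sub_zero]⟩

lemma ZeroMean.const_mul {f : E2 → ℝ} (hf : ZeroMean f) (c : ℝ) : ZeroMean (fun x => c * f x) :=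
  ⟨hf.1.const_mul c, by rw [integral_const_mul, hf.2, mul_zero]⟩

/-- Weak Cauchy–Riemann equation: up to the factor `4`, `hop 0 0 - hop 1 1 - 2 i hop 0 1` is the
quantity `τ_zz + τ_z²`, which is holomorphic by the Liouville equation. The choices
`(i, j) = (0, 1)` and `(1, 0)` give the two equations. The weak form is needed because `τ` is only
`C²`. -/
lemma weak_cauchyRiemann {τ : E2 → ℝ} (hτ : ContDiff ℝ 2 τ) {i j : Fin 2}
    (hpde : ∀ x, pd i (pd i τ) x + pd j (pd j τ) x = 4 * Real.exp (-2 * τ x))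
    {ψ : E2 → ℝ} (hψ : ContDiff ℝ 2 ψ) (hc : HasCompactSupport ψ) :
    ZeroMean (fun x => (hop τ i i x - hop τ j j x) * pd i ψ x + 2 * (hop τ i j x * pd j ψ x)) := by
  have hτ1 : ContDiff ℝ 1 τ := hτ.of_le (by norm_num)
  have hψ1 : ContDiff ℝ 1 ψ := hψ.of_le (by norm_num)
  have ha : ∀ k, ContDiff ℝ 1 (pd k τ) := fun k => contDiff_pd hτ (by norm_num) k
  have hψk : ∀ k, ContDiff ℝ 1 (pd k ψ) := fun k => contDiff_pd hψ (by norm_num) k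
  have hck : ∀ k, HasCompactSupport (pd k ψ) := fun k => hasCompactSupport_pd hc k
  have hv : ContDiff ℝ 1 (fun x => Real.exp (-2 * τ x)) := (contDiff_const.mul hτ1).exp
  -- a total derivative of a compactly supported function integrates to zero
  have div : ∀ {f : E2 → ℝ} (k : Fin 2), ContDiff ℝ 1 f →
      ZeroMean (fun x => f x * pd k ψ x + pd k f x * ψ x) := by
    intro f k hf
    have i1 := integrable_mul_of_compact hf.continuous (hψk k).continuous (hck k)
    have i2 := integrable_mul_of_compact (continuous_pd hf k) hψ.continuous hc
    refine ⟨i1.add i2, ?_⟩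
    rw [integral_add i1 i2, integral_mul_pd hf hψ1 hc k]
    ring
  -- swapping the two derivatives that fall on `∂ⱼτ` and on `ψ` costs only total derivatives
  have T3 : ZeroMean (fun x => pd j (pd j τ) x * pd i ψ x - pd i (pd j τ) x * pd j ψ x) := by
    refine ⟨(integrable_mul_of_compact (continuous_pd (ha j) j) (hψk i).continuous (hck i)).sub
      (integrable_mul_of_compact (continuous_pd (ha j) i) (hψk j).continuous (hck j)), ?_⟩
    rw [integral_sub
      (integrable_mul_of_compact (continuous_pd (ha j) j) (hψk i).continuous (hck i))
      (integrable_mul_of_compact (continuous_pd (ha j) i) (hψk j).continuous (hck j))]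
    have e1 := integral_mul_pd (ha j) (hψk i) (hck i) j
    have e2 := integral_mul_pd (ha j) (hψk j) (hck j) i
    simp only [pd_comm hψ j i] at e1
    linarith
  have e : (fun x => (hop τ i i x - hop τ j j x) * pd i ψ x + 2 * (hop τ i j x * pd j ψ x)) =
      fun x => 4 * (Real.exp (-2 * τ x) * pd i ψ x + pd i (fun x => Real.exp (-2 * τ x)) x * ψ x)
        + ((pd i τ x * pd i τ x) * pd i ψ x + pd i (fun x => pd i τ x * pd i τ x) x * ψ x)
        - ((pd j τ x * pd j τ x) * pd i ψ x + pd i (fun x => pd j τ x * pd j τ x) x * ψ x)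
        + 2 * ((pd i τ x * pd j τ x) * pd j ψ x + pd j (fun x => pd i τ x * pd j τ x) x * ψ x)
        - 2 * (pd j (pd j τ) x * pd i ψ x - pd i (pd j τ) x * pd j ψ x) := by
    funext x
    rw [pd_exp hτ1, pd_mul (ha i) (ha i), pd_mul (ha j) (ha j), pd_mul (ha i) (ha j),
      pd_comm hτ j i]
    unfold hop
    linear_combination (pd i ψ x - 2 * pd i τ x * ψ x) * hpde x
  rw [e]
  exact (((((div i hv).const_mul 4).add (div i ((ha i).mul (ha i)))).sub
    (div i ((ha j).mul (ha j)))).add ((div j ((ha i).mul (ha j))).const_mul 2)).sub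
    (T3.const_mul 2)

/-- Both components of `τ_zz + τ_z²` are weakly harmonic, hence have scale-independent bump
averages. -/
lemma hop_avg_eq {τ : E2 → ℝ} (hτ : ContDiff ℝ 2 τ)
    (hpde : ∀ x, pd 0 (pd 0 τ) x + pd 1 (pd 1 τ) x = 4 * Real.exp (-2 * τ x))
    {lam mu : ℝ} (hl : 0 < lam) (hm : lam ≤ mu) (z : E2) :
    (∫ x, (hop τ 0 0 x - hop τ 1 1 x) * phi mu z x
      = ∫ x, (hop τ 0 0 x - hop τ 1 1 x) * phi lam z x) ∧
    (∫ x, hop τ 0 1 x * phi mu z x = ∫ x, hop τ 0 1 x * phi lam z x) := by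
  have hP := contDiff_Pot lam mu z
  have hP2 : ContDiff ℝ 2 (Pot lam mu z) := hP.of_le (by norm_num)
  have hPc := hasCompactSupport_Pot hl hm z
  have hpde' : ∀ x, pd 1 (pd 1 τ) x + pd 0 (pd 0 τ) x = 4 * Real.exp (-2 * τ x) :=
    fun x => by rw [add_comm, hpde]
  have hd : ∀ k, ContDiff ℝ 2 (pd k (Pot lam mu z)) :=
    fun k => contDiff_pd hP (by norm_num) k
  have hdc : ∀ k, HasCompactSupport (pd k (Pot lam mu z)) := fun k => hasCompactSupport_pd hPc k
  have A := weak_cauchyRiemann hτ hpde (hd 0) (hdc 0)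
  have B := weak_cauchyRiemann hτ hpde' (hd 1) (hdc 1)
  have C := weak_cauchyRiemann hτ hpde (hd 1) (hdc 1)
  have D := weak_cauchyRiemann hτ hpde' (hd 0) (hdc 0)
  have fin : ∀ {f : E2 → ℝ}, Continuous f →
      ∫ x, f x * (phi lam z x - phi mu z x) = 0 →
      ∫ x, f x * phi mu z x = ∫ x, f x * phi lam z x := by
    intro f hf h
    simp only [mul_sub] at h
    rw [integral_sub
      (integrable_mul_of_compact hf (contDiff_phi _ _).continuous (hasCompactSupport_phi hl z))
      (integrable_mul_of_compact hf (contDiff_phi _ _).continuous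
        (hasCompactSupport_phi (hl.trans_le hm) z))] at h
    linarith
  constructor
  · refine fin ((continuous_hop hτ 0 0).sub (continuous_hop hτ 1 1)) ?_
    rw [← (A.sub B).2]
    congr 1
    funext x
    beta_reduce
    rw [← laplacian_Pot, hop_comm hτ 1 0, pd_comm hP2 1 0]
    ring
  · refine fin (continuous_hop hτ 0 1) ?_
    rw [← ((C.add D).const_mul (1 / 2)).2]
    congr 1
    funext x
    beta_reduce
    rw [← laplacian_Pot, hop_comm hτ 1 0, pd_comm hP2 1 0]
    ring

/-! ### Growth, energy and decay of averages -/

/-- If `|z|` and `|x - z|` are at most `lam^{-1/2}`, the bump of radius `lam^{-1/2}` about `x` is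
dominated by the one of four times that radius about the origin. -/
lemma phi_comparison {lam : ℝ} (hl : 0 < lam) {z x : E2} (hz : lam * ‖z‖ ^ 2 ≤ 1)
    (hx : lam * ‖x - z‖ ^ 2 ≤ 1) (y : E2) : phi lam x y ≤ 200 * phi (lam / 16) 0 y := by
  by_cases hy : 1 ≤ lam * ‖y - x‖ ^ 2
  · rw [phi_eq_zero hy]
    exact mul_nonneg (by norm_num) (phi_nonneg (by positivity) _ _)
  push Not at hy
  have r0 := Real.sqrt_nonneg lam
  have key : ∀ u : E2, lam * ‖u‖ ^ 2 ≤ 1 → √lam * ‖u‖ ≤ 1 := fun u hu => by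
    refine (sq_le_one_iff₀ (by positivity)).1 ?_
    rwa [mul_pow, Real.sq_sqrt hl.le]
  have tri : ‖y‖ ≤ ‖y - x‖ + ‖x - z‖ + ‖z‖ := by
    calc ‖y‖ = ‖(y - x) + (x - z) + z‖ := by congr 1; abel
      _ ≤ _ := norm_add₃_le
  have h3 : √lam * ‖y‖ ≤ 3 := by
    have := mul_le_mul_of_nonneg_left tri r0
    have a := key _ hy.le
    have b := key _ hx
    have c := key _ hz
    linarith
  have h9 : lam * ‖y‖ ^ 2 ≤ 9 := by
    rw [← Real.sq_sqrt hl.le, ← mul_pow]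
    have : 0 ≤ √lam * ‖y‖ := by positivity
    nlinarith
  have hb : bump (lam * ‖y - x‖ ^ 2) ≤ 4 := by
    unfold bump
    rw [if_pos hy.le]
    have h0 : 0 ≤ lam * ‖y - x‖ ^ 2 := by positivity
    have : (1 - lam * ‖y - x‖ ^ 2) ^ 3 ≤ 1 := pow_le_one₀ (by linarith) (by linarith)
    linarith
  have hb' : 4 * (7 / 16) ^ 3 ≤ bump (lam / 16 * ‖y‖ ^ 2) := by
    unfold bump
    rw [if_pos (by linarith)]
    gcongr
    linarith
  unfold phi
  rw [sub_zero]
  have := mul_le_mul_of_nonneg_left hb hl.le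
  have := mul_le_mul_of_nonneg_left hb' hl.le
  nlinarith

/-- Sub-mean value property and logarithmic growth of bump averages together: `τ(x)` grows at
most like `t` for `|x| ≲ t²`. -/
lemma growth {τ : E2 → ℝ} (hτ : ContDiff ℝ 2 τ)
    (hpde : ∀ x, pd 0 (pd 0 τ) x + pd 1 (pd 1 τ) x = 4 * Real.exp (-2 * τ x))
    (hnonneg : ∀ y, 0 ≤ τ y) (hmass : Integrable (fun y : E2 => Real.exp (-2 * τ y))) :
    ∃ M : ℝ, 0 ≤ M ∧ ∀ t : ℝ, 1 ≤ t → ∀ z x : E2, ‖z‖ ≤ t ^ 2 → ‖x - z‖ ≤ t ^ 2 →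
      τ x ≤ M * t := by
  set c := ∫ x, phi 1 0 x with hc
  have c0 : 0 < c := integral_phi_pos
  set I1 := ∫ x, τ x * phi 1 0 x with hI1
  set m := ∫ x, Real.exp (-2 * τ x) with hm
  have hI10 : 0 ≤ I1 := integral_nonneg fun x => mul_nonneg (hnonneg x) (phi_nonneg one_pos 0 x)
  have m0 : 0 ≤ m := integral_nonneg fun x => (Real.exp_pos _).le
  have ipos : ∀ {lam : ℝ}, 0 < lam → ∀ z, Integrable (fun x => τ x * phi lam z x) := fun h z =>
    integrable_mul_of_compact hτ.continuous (contDiff_phi _ z).continuous (hasCompactSupport_phi h z)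
  -- sub-mean value property: averages at finer scales are smaller, as `pot ≥ 0`
  have sub : ∀ {lam : ℝ}, 0 < lam → ∀ x, τ x * c ≤ ∫ y, τ y * phi lam x y := by
    intro lam hl x
    rw [← le_div_iff₀ c0]
    refine le_of_avg_le hτ.continuous x _ lam fun mu _ hmu => ?_
    rw [div_mul_cancel₀ _ c0.ne', ← sub_nonneg, integral_phi_sub hτ hl hmu]
    refine integral_nonneg fun y => ?_
    rw [hpde]
    exact mul_nonneg (by positivity) (pot_nonneg (by positivity) hl hmu)
  -- since the mass is finite, averages about the origin grow at most logarithmically in the radius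
  have up : ∀ {lam : ℝ}, 0 < lam → lam ≤ 1 →
      ∫ y, τ y * phi lam 0 y ≤ I1 + 4 * m * (Real.log (1 / lam) + 3) := by
    intro lam hl h1
    have h := integral_phi_sub hτ hl h1 0
    have : ∫ x, (pd 0 (pd 0 τ) x + pd 1 (pd 1 τ) x) * Pot lam 1 0 x
        ≤ ∫ x, (4 * (Real.log (1 / lam) + 3)) * Real.exp (-2 * τ x) := by
      refine integral_mono ?_ (hmass.const_mul _) fun x => ?_
      · exact integrable_mul_of_compact ((continuous_pd_pd hτ _ _).add (continuous_pd_pd hτ _ _))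
          (contDiff_Pot _ _ _).continuous (hasCompactSupport_Pot hl h1 0)
      · beta_reduce
        rw [hpde]
        have : Pot lam 1 0 x ≤ Real.log (1 / lam) + 3 := pot_le (by positivity) hl h1
        have := mul_le_mul_of_nonneg_left this (Real.exp_pos (-2 * τ x)).le
        linarith
    rw [integral_const_mul] at this
    linarith
  refine ⟨200 * (I1 + 40 * m) / c, by positivity, fun t ht z x hz hx => ?_⟩
  have t0 : 0 < t := by linarith
  set lam := (t ^ 4)⁻¹ with hlam
  have hl : 0 < lam := by positivity
  have hl1 : lam ≤ 1 := inv_le_one_of_one_le₀ (one_le_pow₀ ht)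
  have conv : ∀ u : E2, ‖u‖ ≤ t ^ 2 → lam * ‖u‖ ^ 2 ≤ 1 := fun u hu => by
    calc lam * ‖u‖ ^ 2 ≤ lam * (t ^ 2) ^ 2 := by gcongr
      _ = 1 := by rw [hlam]; field_simp
  have h1 := sub hl x
  have h2 : ∫ y, τ y * phi lam x y ≤ ∫ y, 200 * (τ y * phi (lam / 16) 0 y) := by
    refine integral_mono (ipos hl x) ((ipos (by positivity) 0).const_mul _) fun y => ?_
    have := mul_le_mul_of_nonneg_left (phi_comparison hl (conv z hz) (conv _ hx) y) (hnonneg y)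
    linarith
  rw [integral_const_mul] at h2
  have h3 := up (lam := lam / 16) (by positivity) (by linarith)
  have hlog : Real.log (1 / (lam / 16)) ≤ 3 + 4 * t := by
    have e : 1 / (lam / 16) = 2 ^ 4 * t ^ 4 := by rw [hlam]; field_simp; norm_num
    rw [e, Real.log_mul (by positivity) (by positivity), Real.log_pow, Real.log_pow]
    have := Real.log_le_sub_one_of_pos t0
    have := Real.log_two_lt_d9
    push_cast
    linarith
  have h4 : 4 * m * (Real.log (1 / (lam / 16)) + 3) ≤ 4 * m * (10 * t) := by
    gcongr; linarith
  have h5 : I1 ≤ I1 * t := le_mul_of_one_le_right hI10 ht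
  rw [div_mul_eq_mul_div, le_div_iff₀ c0]
  linarith

/-- At scale `lam = t⁻⁴` the bump lives on a disc of area proportional to `t⁴`, while its Hessian is
`O(t⁻⁸)`. -/
lemma abs_integral_hess_le {f : E2 → ℝ} {t N : ℝ} (ht : 1 ≤ t) (z : E2)
    (hN : ∀ x, ‖x - z‖ ≤ t ^ 2 → |f x| ≤ N) (i j : Fin 2) :
    |∫ x, f x * pd i (pd j (phi (t ^ 4)⁻¹ z)) x|
      ≤ 480 * volume.real (closedBall (0 : E2) 1) * N * (t ^ 4)⁻¹ := by
  have t0 : 0 < t := by linarith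
  have hl : 0 < (t ^ 4)⁻¹ := by positivity
  have hr : (√(t ^ 4)⁻¹)⁻¹ = t ^ 2 := by
    rw [Real.sqrt_inv, inv_inv, show t ^ 4 = (t ^ 2) ^ 2 by ring, Real.sqrt_sq (by positivity)]
  rw [← setIntegral_eq_integral_of_forall_compl_eq_zero (s := closedBall z (t ^ 2)) fun x hx => by
    rw [hess_phi_eq_zero hl i j (by rwa [hr]), mul_zero]]
  have := norm_setIntegral_le_of_norm_le_const (μ := volume) (s := closedBall z (t ^ 2))
    (f := fun x => f x * pd i (pd j (phi (t ^ 4)⁻¹ z)) x) (C := N * (480 * ((t ^ 4)⁻¹) ^ 2))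
    measure_closedBall_lt_top (fun x hx => by
      rw [mem_closedBall, dist_eq_norm] at hx
      rw [Real.norm_eq_abs, abs_mul]
      exact mul_le_mul (hN x hx) (abs_hess_phi_le hl z i j x) (abs_nonneg _)
        ((abs_nonneg _).trans (hN x hx)))
  rw [Real.norm_eq_abs] at this
  refine this.trans (le_of_eq ?_)
  have hv : volume.real (closedBall z (t ^ 2)) = t ^ 4 * volume.real (closedBall (0 : E2) 1) := by
    rw [Measure.real, Measure.addHaar_closedBall' _ _ (by positivity), ENNReal.toReal_mul,
      ENNReal.toReal_ofReal (by positivity)]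
    simp [Measure.real]
    left; ring
  rw [hv]
  field_simp

/-- Caccioppoli-type bound for the Dirichlet energy: `∂₀∂₀(τ²) + ∂₁∂₁(τ²) ≥ 2 |∇τ|²`, because
`τ` and `∂₀∂₀τ + ∂₁∂₁τ` are nonnegative. -/
lemma energy_le {τ : E2 → ℝ} (hτ : ContDiff ℝ 2 τ)
    (hpde : ∀ x, pd 0 (pd 0 τ) x + pd 1 (pd 1 τ) x = 4 * Real.exp (-2 * τ x))
    (hnonneg : ∀ y, 0 ≤ τ y) {lam : ℝ} (hl : 0 < lam) (z : E2) :
    2 * ∫ x, (pd 0 τ x * pd 0 τ x + pd 1 τ x * pd 1 τ x) * phi lam z x ≤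
      (∫ x, (τ x * τ x) * pd 0 (pd 0 (phi lam z)) x)
        + ∫ x, (τ x * τ x) * pd 1 (pd 1 (phi lam z)) x := by
  have hτ1 : ContDiff ℝ 1 τ := hτ.of_le (by norm_num)
  have ha : ∀ k, ContDiff ℝ 1 (pd k τ) := fun k => contDiff_pd hτ (by norm_num) k
  have hsq : ContDiff ℝ 2 (fun x => τ x * τ x) := hτ.mul hτ
  have hφ := contDiff_phi lam z
  have hφc := hasCompactSupport_phi hl z
  have e2 : ∀ k x, pd k (pd k (fun x => τ x * τ x)) x
      = 2 * (pd k τ x * pd k τ x + τ x * pd k (pd k τ) x) := by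
    intro k x
    have e1 : pd k (fun x => τ x * τ x) = fun x => (2 * τ x) * pd k τ x := funext fun x => by
      rw [pd_mul hτ1 hτ1]; ring
    have e0 : pd k (fun x => 2 * τ x) x = 2 * pd k τ x := by
      unfold pd
      rw [fderiv_const_mul (hτ1.differentiable one_ne_zero x)]
      simp
    rw [e1, pd_mul (contDiff_const.mul hτ1) (ha k), e0]
    ring
  have ii : ∀ k, Integrable (fun x => pd k (pd k (fun x => τ x * τ x)) x * phi lam z x) :=
    fun k => integrable_mul_of_compact (continuous_pd_pd hsq k k) hφ.continuous hφc
  rw [integral_mul_laplacian hsq hφ hφc, integral_mul_laplacian hsq hφ hφc,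
    ← integral_add (ii 0) (ii 1), ← integral_const_mul]
  refine integral_mono (Integrable.const_mul (integrable_mul_of_compact
    (((ha 0).mul (ha 0)).add ((ha 1).mul (ha 1))).continuous hφ.continuous hφc) 2)
    ((ii 0).add (ii 1)) fun x => ?_
  beta_reduce
  rw [e2, e2]
  have h1 : 0 ≤ τ x * (pd 0 (pd 0 τ) x + pd 1 (pd 1 τ) x) * phi lam z x := by
    rw [hpde]
    have := hnonneg x
    have := phi_nonneg hl z x
    positivity
  linarith

/-- Large-scale bump averages of `hop` decay: both derivatives in `∂ᵢ∂ⱼτ` are moved to the bump,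
and `∂ᵢτ ∂ⱼτ` is controlled by the energy; on the disc of radius `t²`, `τ` is `O(t)`, so the two
terms are `O(t⁻³)` and `O(t⁻²)`. -/
lemma hop_avg_le {τ : E2 → ℝ} (hτ : ContDiff ℝ 2 τ)
    (hpde : ∀ x, pd 0 (pd 0 τ) x + pd 1 (pd 1 τ) x = 4 * Real.exp (-2 * τ x))
    (hnonneg : ∀ y, 0 ≤ τ y) (hmass : Integrable (fun y : E2 => Real.exp (-2 * τ y))) :
    ∃ C : ℝ, ∀ z : E2, ∀ t : ℝ, 1 ≤ t → ‖z‖ ≤ t → ∀ i j,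
      |∫ x, hop τ i j x * phi (t ^ 4)⁻¹ z x| ≤ C / t ^ 2 := by
  obtain ⟨M, M0, hM⟩ := growth hτ hpde hnonneg hmass
  set V := volume.real (closedBall (0 : E2) 1) with hV
  have V0 : 0 ≤ V := measureReal_nonneg
  refine ⟨480 * V * (M + M ^ 2), fun z t ht hz i j => ?_⟩
  have t0 : 0 < t := by linarith
  have hl : 0 < (t ^ 4)⁻¹ := by positivity
  have hzt : ‖z‖ ≤ t ^ 2 := hz.trans (le_self_pow₀ ht two_ne_zero)
  have hφ := contDiff_phi (t ^ 4)⁻¹ z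
  have hφc := hasCompactSupport_phi hl z
  have ha : ∀ k, ContDiff ℝ 1 (pd k τ) := fun k => contDiff_pd hτ (by norm_num) k
  have b1 : ∀ x, ‖x - z‖ ≤ t ^ 2 → |τ x| ≤ M * t := fun x hx => by
    rw [abs_of_nonneg (hnonneg x)]; exact hM t ht z x hzt hx
  have b2 : ∀ x, ‖x - z‖ ≤ t ^ 2 → |τ x * τ x| ≤ (M * t) ^ 2 := fun x hx => by
    rw [abs_mul, ← sq]; exact pow_le_pow_left₀ (abs_nonneg _) (b1 x hx) 2
  have E := energy_le hτ hpde hnonneg hl z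
  have E0 := (abs_le.1 (abs_integral_hess_le ht z b2 0 0)).2
  have E1 := (abs_le.1 (abs_integral_hess_le ht z b2 1 1)).2
  have H := abs_integral_hess_le ht z b1 j i
  rw [integral_mul_laplacian hτ hφ hφc] at H
  have iE : Integrable (fun x => (pd 0 τ x * pd 0 τ x + pd 1 τ x * pd 1 τ x) * phi (t ^ 4)⁻¹ z x) :=
    integrable_mul_of_compact (((ha 0).mul (ha 0)).add ((ha 1).mul (ha 1))).continuous
      hφ.continuous hφc
  have G : |∫ x, (pd i τ x * pd j τ x) * phi (t ^ 4)⁻¹ z x| ≤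
      ∫ x, (pd 0 τ x * pd 0 τ x + pd 1 τ x * pd 1 τ x) * phi (t ^ 4)⁻¹ z x := by
    refine norm_integral_le_of_norm_le (f := fun x => (pd i τ x * pd j τ x) * phi (t ^ 4)⁻¹ z x)
      iE (Eventually.of_forall fun x => ?_)
    rw [norm_mul, Real.norm_eq_abs, Real.norm_eq_abs, abs_of_nonneg (phi_nonneg hl z x)]
    refine mul_le_mul_of_nonneg_right ?_ (phi_nonneg hl z x)
    have q : ∀ k, pd k τ x ^ 2 ≤ pd 0 τ x * pd 0 τ x + pd 1 τ x * pd 1 τ x := fun k => by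
      fin_cases k <;> simp <;> nlinarith [sq_nonneg (pd 0 τ x), sq_nonneg (pd 1 τ x)]
    have qi := q i
    have qj := q j
    rw [abs_le]
    constructor <;> nlinarith [sq_nonneg (pd i τ x + pd j τ x), sq_nonneg (pd i τ x - pd j τ x)]
  have split : ∫ x, hop τ i j x * phi (t ^ 4)⁻¹ z x =
      (∫ x, pd i (pd j τ) x * phi (t ^ 4)⁻¹ z x)
        + ∫ x, (pd i τ x * pd j τ x) * phi (t ^ 4)⁻¹ z x := by
    rw [← integral_add (integrable_mul_of_compact (continuous_pd_pd hτ i j) hφ.continuous hφc)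
      (integrable_mul_of_compact ((ha i).mul (ha j)).continuous hφ.continuous hφc)]
    simp only [hop, add_mul]
  rw [split]
  refine (abs_add_le _ _).trans ?_
  have e1 : 480 * V * (M * t) * (t ^ 4)⁻¹ ≤ 480 * V * M / t ^ 2 := by
    have : t * (t ^ 4)⁻¹ ≤ (t ^ 2)⁻¹ := by
      rw [← div_eq_mul_inv, div_le_iff₀ (by positivity)]
      have : (t ^ 2)⁻¹ * t ^ 4 = t ^ 2 := by field_simp
      rw [this]; exact le_self_pow₀ ht two_ne_zero
    calc _ = 480 * V * M * (t * (t ^ 4)⁻¹) := by ring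
      _ ≤ 480 * V * M * (t ^ 2)⁻¹ := by gcongr
      _ = _ := by ring
  have e2 : 480 * V * (M * t) ^ 2 * (t ^ 4)⁻¹ = 480 * V * M ^ 2 / t ^ 2 := by field_simp
  have e3 : 480 * V * (M + M ^ 2) / t ^ 2 = 480 * V * M / t ^ 2 + 480 * V * M ^ 2 / t ^ 2 := by
    ring
  rw [e2] at E0 E1
  linarith

/-- A continuous function whose bump averages are independent of scale and decay at large scales
vanishes. -/
lemma eq_zero_of_avg {f : E2 → ℝ} (hf : Continuous f) (z : E2) (C : ℝ)
    (hconst : ∀ lam mu, 0 < lam → lam ≤ mu →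
      ∫ x, f x * phi mu z x = ∫ x, f x * phi lam z x)
    (hdec : ∀ t : ℝ, 1 ≤ t → ‖z‖ ≤ t → |∫ x, f x * phi (t ^ 4)⁻¹ z x| ≤ C / t ^ 2) : f z = 0 := by
  have zero : ∀ mu, 0 < mu → ∫ x, f x * phi mu z x = 0 := by
    intro mu hmu
    refine abs_nonpos_iff.1 (ge_of_tendsto (f := fun t : ℝ => C / t ^ 2)
      (tendsto_const_nhds.div_atTop (tendsto_pow_atTop two_ne_zero)) ?_)
    have h4 : ∀ᶠ t : ℝ in atTop, (t ^ 4)⁻¹ ≤ mu :=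
      (tendsto_inv_atTop_zero.comp (tendsto_pow_atTop (α := ℝ) four_ne_zero)).eventually
        (eventually_le_nhds hmu)
    filter_upwards [h4, eventually_ge_atTop 1, eventually_ge_atTop ‖z‖] with t a b c
    rw [hconst _ _ (by positivity) a]
    exact hdec t b c
  refine le_antisymm (le_of_avg_le hf z 0 1 fun mu h _ => ?_) (neg_nonpos.1
    (le_of_avg_le hf.neg z 0 1 fun mu h _ => ?_))
  · rw [zero mu h, zero_mul]
  · simp only [Pi.neg_apply, neg_mul]
    rw [integral_neg, zero mu h]; simp

/-! ### The classification -/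

/-- Chen–Li classification of finite-mass solutions of the Liouville
equation, normalized at the origin with `τ ≥ 0`. -/
theorem chen_li_classification
    (τ : E2 → ℝ) (hτ : ContDiff ℝ 2 τ)
    (hpde : ∀ y, posLap (fun z => -τ z) y = 4 * Real.exp (-(2 * τ y)))
    (h0 : τ 0 = 0) (hgrad : gradient τ 0 = 0)
    (hnonneg : ∀ y, 0 ≤ τ y)
    (hmass : Integrable (fun y : E2 => Real.exp (-(2 * τ y)))) :
    ∀ y : E2, τ y = Real.log (1 + ‖y‖ ^ 2) := by
  have P := liouville_pd hτ hpde
  have hd : fderiv ℝ τ 0 = 0 := by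
    have : (InnerProductSpace.toDual ℝ E2).symm (fderiv ℝ τ 0) = 0 := hgrad
    simpa using this
  have P' : ∀ x, pd 0 (pd 0 τ) x + pd 1 (pd 1 τ) x = 4 * Real.exp (-2 * τ x) := fun x => by
    rw [P, neg_mul]
  simp only [← neg_mul] at hmass
  obtain ⟨C, hC⟩ := hop_avg_le hτ P' hnonneg hmass
  refine endgame hτ P h0 (fun i => by rw [pd, hd]; rfl) (fun x => ?_) (fun x => ?_)
  · refine sub_eq_zero.1 (eq_zero_of_avg (f := fun x => hop τ 0 0 x - hop τ 1 1 x)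
      ((continuous_hop hτ 0 0).sub (continuous_hop hτ 1 1)) x (2 * C)
      (fun lam mu hl hm => (hop_avg_eq hτ P' hl hm x).1) (fun t ht hx => ?_))
    have hl : 0 < (t ^ 4)⁻¹ := by positivity
    simp only [sub_mul]
    rw [integral_sub
      (integrable_mul_of_compact (continuous_hop hτ 0 0) (contDiff_phi _ _).continuous
        (hasCompactSupport_phi hl x))
      (integrable_mul_of_compact (continuous_hop hτ 1 1) (contDiff_phi _ _).continuous
        (hasCompactSupport_phi hl x))]
    refine (abs_sub _ _).trans ?_
    have a := hC x t ht hx 0 0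
    have b := hC x t ht hx 1 1
    rw [mul_div_assoc]
    linarith
  · exact eq_zero_of_avg (continuous_hop hτ 0 1) x C
      (fun lam mu hl hm => (hop_avg_eq hτ P' hl hm x).2) (fun t ht hx => hC x t ht hx 0 1)
end

section
/- Let τ_p: B_0(R_p) → ℝ (R_p → ∞) be C² functions with τ_p ≥ 0, τ_p(0) = 0, and 0 < Δ(-τ_p) ≤ 4 (Δ the positive Laplacian). Then (τ_p) is, up to a subsequence, convergent in C¹_loc(ℝ²) to some function τ_∞ ∈ C¹(ℝ²) with τ_∞ ≥ 0 and τ_∞(0) = 0. -/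
/-!
Write `L = ∂_xx + ∂_yy`, so that the hypothesis reads `0 < L τ_n ≤ 4` with `τ_n ≥ 0` and
`τ_n 0 = 0`. Everything rests on the strict maximum principle (`max_principle`): a `C²` function
with `L v > 0` has no interior maximum. No integral representation is used.

*Local bounds* (`le_of_nonneg_of_lap`). On a circle of radius `ρ`, trigonometric polynomials
approximate `u = τ_n` by `h = Re F` with `F` entire. As `L u > 0`, the maximum principle gives
`u ≤ h + ρ²` on the disc, so in particular `h ≥ -ρ²`; as `L (u - 2|x|²) < 0`, it also gives
`h 0 ≤ u 0 + 3ρ² = 3ρ²`. The Borel–Carathéodory theorem for `-F` then bounds `h`, hence `u`, on the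
disc of radius `ρ / 2`. It plays the role of Harnack's inequality.

*Gradient estimate* (`norm_fderiv_le`). If `|L u| < 5` and `|u| ≤ M` on a disc of radius `d` about
`x`, then `‖Du(x)‖ ≤ 2 (2M/d + 5d/2)`. Following Brandt, the odd part of `u` under reflection in a
line through `x` is compared with an explicit quadratic barrier on the half disc.

*Compactness*. The two estimates make `τ_n` bounded and Lipschitz on each fixed ball for large `n`,
so a diagonal argument gives a subsequence that is uniformly Cauchy on every ball. The
gradient estimate applies again to differences, because `|L (τ_n - τ_m)| < 4`: it bounds
`‖D(τ_n - τ_m)‖` by `4 sup |τ_n - τ_m| / d + 5d`, and `d` is arbitrary, so the derivatives are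
uniformly Cauchy as well. No Hölder estimate for the gradient is needed.
-/

open Real MeasureTheory Filter Metric

open scoped Topology

/-! ### The Laplacian on explicit functions and the maximum principle -/

/-- The standard basis vector `e i` of `ℝ²`. -/
noncomputable abbrev basisVec (i : Fin 2) : E2 := EuclideanSpace.single i (1 : ℝ)

/-- `HasLap v p L`: the function `v` is `C²` at `p` and its analyst's Laplacian
`∂_xx v + ∂_yy v` at `p` equals `L`. -/
def HasLap (v : E2 → ℝ) (p : E2) (L : ℝ) : Prop :=
  ContDiffAt ℝ 2 v p ∧ ∑ i : Fin 2, iteratedDeriv 2 (fun t : ℝ => v (p + t • basisVec i)) 0 = L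

lemma ContDiffAt.line {v : E2 → ℝ} {p : E2} (h : ContDiffAt ℝ 2 v p) (e : E2) :
    ContDiffAt ℝ 2 (fun t : ℝ => v (p + t • e)) 0 := by
  have h' : ContDiffAt ℝ 2 v (p + (0 : ℝ) • e) := by simpa using h
  exact h'.comp (0 : ℝ) (f := fun t : ℝ => p + t • e) (by fun_prop)

lemma HasLap.add {v w : E2 → ℝ} {p : E2} {L K : ℝ} (hv : HasLap v p L) (hw : HasLap w p K) :
    HasLap (fun q => v q + w q) p (L + K) := by
  refine ⟨hv.1.add hw.1, ?_⟩
  rw [← hv.2, ← hw.2, ← Finset.sum_add_distrib]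
  refine Finset.sum_congr rfl fun i _ => ?_
  exact iteratedDeriv_add (hv.1.line _) (hw.1.line _)

lemma HasLap.const_mul {v : E2 → ℝ} {p : E2} {L : ℝ} (c : ℝ) (hv : HasLap v p L) :
    HasLap (fun q => c * v q) p (c * L) := by
  refine ⟨contDiffAt_const.mul hv.1, ?_⟩
  rw [← hv.2, Finset.mul_sum]
  refine Finset.sum_congr rfl fun i _ => ?_
  exact iteratedDeriv_const_mul c (hv.1.line _)

lemma HasLap.neg {v : E2 → ℝ} {p : E2} {L : ℝ} (hv : HasLap v p L) :
    HasLap (fun q => -v q) p (-L) := by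
  simpa using hv.const_mul (-1)

lemma HasLap.sub {v w : E2 → ℝ} {p : E2} {L K : ℝ} (hv : HasLap v p L) (hw : HasLap w p K) :
    HasLap (fun q => v q - w q) p (L - K) := by
  simpa [sub_eq_add_neg] using hv.add hw.neg

lemma hasLap_const (c : ℝ) (p : E2) : HasLap (fun _ => c) p 0 := by
  refine ⟨contDiffAt_const, ?_⟩
  simp [iteratedDeriv_succ]

lemma iteratedDeriv_two_quadratic (a b c : ℝ) :
    iteratedDeriv 2 (fun t : ℝ => a + b * t + c * t ^ 2) 0 = 2 * c := by
  have h1 : deriv (fun t : ℝ => a + b * t + c * t ^ 2) = fun t => b + 2 * c * t := by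
    funext t
    have := (((hasDerivAt_id t).const_mul b).const_add a).add
      (((hasDerivAt_id t).pow 2).const_mul c)
    refine HasDerivAt.deriv (this.congr_deriv ?_)
    simp; ring
  have h2 : HasDerivAt (fun t : ℝ => b + 2 * c * t) (2 * c) 0 := by
    simpa using ((hasDerivAt_id (0 : ℝ)).const_mul (2 * c)).const_add b
  rw [iteratedDeriv_succ, iteratedDeriv_one, h1, h2.deriv]

lemma hasLap_coord (i : Fin 2) (c : ℝ) (p : E2) : HasLap (fun q => q i - c) p 0 := by
  refine ⟨by fun_prop, Finset.sum_eq_zero fun k _ => ?_⟩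
  have := iteratedDeriv_two_quadratic (p i - c) (basisVec k i) 0
  rw [mul_zero] at this
  rw [← this]
  congr 1; funext t
  simp only [PiLp.add_apply, PiLp.smul_apply, smul_eq_mul]; ring

lemma hasLap_coord_sq (i : Fin 2) (c : ℝ) (p : E2) : HasLap (fun q => (q i - c) ^ 2) p 2 := by
  refine ⟨by fun_prop, ?_⟩
  have key : ∀ k : Fin 2, iteratedDeriv 2 (fun t : ℝ => ((p + t • basisVec k) i - c) ^ 2) 0
      = 2 * (basisVec k i) ^ 2 := by
    intro k
    rw [← iteratedDeriv_two_quadratic ((p i - c) ^ 2) (2 * (p i - c) * basisVec k i)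
      ((basisVec k i) ^ 2)]
    congr 1; funext t
    simp only [PiLp.add_apply, PiLp.smul_apply, smul_eq_mul]; ring
  simp only [key]
  fin_cases i <;> simp

/-- The reflection of `ℝ²` in the line `{p | p i = x i}`. -/
noncomputable def reflect (i : Fin 2) (x p : E2) : E2 := p - (2 * (p i - x i)) • basisVec i

lemma reflect_apply_self (i : Fin 2) (x p : E2) : reflect i x p i - x i = -(p i - x i) := by
  simp [reflect]; ring

lemma reflect_apply_of_ne {i j : Fin 2} (hij : j ≠ i) (x p : E2) : reflect i x p j = p j := by
  simp [reflect, hij]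

lemma HasLap.reflect {v : E2 → ℝ} {p : E2} {L : ℝ} (i : Fin 2) (x : E2)
    (hv : HasLap v (reflect i x p) L) : HasLap (fun q => v (_root_.reflect i x q)) p L := by
  refine ⟨hv.1.comp p (by unfold _root_.reflect; fun_prop), ?_⟩
  rw [← hv.2]
  refine Finset.sum_congr rfl fun k _ => ?_
  by_cases hk : k = i
  · subst hk
    have : (fun t : ℝ => v (_root_.reflect k x (p + t • basisVec k)))
        = fun t => (fun s : ℝ => v (_root_.reflect k x p + s • basisVec k)) (-t) := by
      funext t
      congr 1
      ext j
      by_cases hj : j = k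
      · subst hj; simp [_root_.reflect]; ring
      · simp [_root_.reflect, hj]
    rw [this, iteratedDeriv_comp_neg 2
      (fun s : ℝ => v (_root_.reflect k x p + s • basisVec k))]
    simp
  · congr 1; funext t
    refine congrArg v ?_
    ext j
    have hk' : i ≠ k := fun h => hk h.symm
    simp [_root_.reflect, hk']; ring

lemma hasLap_re_of_differentiable {F : ℂ → ℂ} (hF : Differentiable ℂ F) (p : E2) :
    HasLap (fun q => (F ((q 0 : ℂ) + (q 1 : ℂ) * Complex.I)).re) p 0 := by
  have hFc : ContDiff ℂ 2 F := hF.contDiff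
  refine ⟨?_, ?_⟩
  · have h1 : ContDiff ℝ 2 F := hFc.restrict_scalars ℝ
    have h2 : ContDiff ℝ 2 (fun q : E2 => ((q 0 : ℂ) + (q 1 : ℂ) * Complex.I)) := by
      have h3 : ∀ i : Fin 2, ContDiff ℝ 2 (fun q : E2 => ((q i : ℝ) : ℂ)) := fun i =>
        Complex.ofRealCLM.contDiff.comp (by fun_prop)
      exact (h3 0).add ((h3 1).mul contDiff_const)
    exact (Complex.reCLM.contDiff.comp (h1.comp h2)).contDiffAt
  · have hF' : Differentiable ℂ (deriv F) := by
      have : ContDiff ℂ 1 (deriv F) := hF.contDiff.deriv'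
      exact this.differentiable (by norm_num)
    have line : ∀ (z c : ℂ), iteratedDeriv 2 (fun t : ℝ => (F (z + t * c)).re) 0
        = (c ^ 2 * deriv (deriv F) z).re := by
      intro z c
      have step : ∀ {G : ℂ → ℂ}, Differentiable ℂ G → ∀ t : ℝ,
          HasDerivAt (fun t : ℝ => G (z + t * c)) (deriv G (z + t * c) * c) t := by
        intro G hG t
        have h1 : HasDerivAt (fun w : ℂ => z + w * c) c (t : ℂ) := by
          simpa using ((hasDerivAt_id (t : ℂ)).mul_const c).const_add z
        exact ((hG (z + t * c)).hasDerivAt.comp (t : ℂ) h1).comp_ofReal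
      have re : ∀ {g : ℝ → ℂ} {g' : ℂ} {t : ℝ}, HasDerivAt g g' t →
          HasDerivAt (fun t => (g t).re) g'.re t := by
        intro g g' t hg
        exact Complex.reCLM.hasFDerivAt.comp_hasDerivAt t hg
      have d1 : deriv (fun t : ℝ => (F (z + t * c)).re)
          = fun t : ℝ => (deriv F (z + t * c) * c).re := by
        funext t; exact (re (step hF t)).deriv
      rw [iteratedDeriv_succ, iteratedDeriv_one, d1,
        (re ((step hF' 0).mul_const c)).deriv]
      congr 1; simp; ring
    have e0 : ∀ t : ℝ, (((p + t • basisVec 0) 0 : ℝ) : ℂ)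
        + (((p + t • basisVec 0) 1 : ℝ) : ℂ) * Complex.I
        = ((p 0 : ℂ) + (p 1 : ℂ) * Complex.I) + t * 1 := by
      intro t; simp; ring
    have e1 : ∀ t : ℝ, (((p + t • basisVec 1) 0 : ℝ) : ℂ)
        + (((p + t • basisVec 1) 1 : ℝ) : ℂ) * Complex.I
        = ((p 0 : ℂ) + (p 1 : ℂ) * Complex.I) + t * Complex.I := by
      intro t; simp; ring
    rw [Fin.sum_univ_two]
    simp only [e0, e1, line]
    simp

lemma iteratedDeriv_two_nonpos_of_isLocalMax {f : ℝ → ℝ} (hf : ContDiffAt ℝ 2 f 0)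
    (hm : IsLocalMax f 0) : iteratedDeriv 2 f 0 ≤ 0 := by
  by_contra! hpos
  have h2 : iteratedDeriv 2 f 0 = deriv (deriv f) 0 := by
    rw [iteratedDeriv_succ, iteratedDeriv_one]
  rw [h2] at hpos
  have hmin := isLocalMin_of_deriv_deriv_pos hpos hm.deriv_eq_zero hf.continuousAt
  have hconst : f =ᶠ[𝓝 0] fun _ => f 0 := by
    filter_upwards [hm, hmin] with t h1 h2 using le_antisymm h1 h2
  rw [hconst.deriv.deriv_eq] at hpos
  simp at hpos

/-- The maximum principle on a compact set `S`: a strictly subharmonic function on the open part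
`O` has no interior maximum, so it is nonpositive if it is so on `S \ O`. -/
lemma max_principle {S O : Set E2} (hS : IsCompact S) (hO : IsOpen O) (hOS : O ⊆ S) {v : E2 → ℝ}
    (hv : ContinuousOn v S) (hlap : ∀ p ∈ O, ∃ L > 0, HasLap v p L)
    (hb : ∀ p ∈ S, p ∉ O → v p ≤ 0) : ∀ p ∈ S, v p ≤ 0 := by
  intro q hq
  obtain ⟨p, hp, hmax⟩ := hS.exists_isMaxOn ⟨q, hq⟩ hv
  by_contra! hvq
  have hvp : 0 < v p := hvq.trans_le (hmax hq)
  have hpO : p ∈ O := by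
    by_contra h
    exact absurd (hb p hp h) (not_le.2 hvp)
  obtain ⟨L, hL, hC, hsum⟩ := hlap p hpO
  have hloc : IsLocalMax v p := hmax.isLocalMax (mem_of_superset (hO.mem_nhds hpO) hOS)
  have : ∑ i : Fin 2, iteratedDeriv 2 (fun t : ℝ => v (p + t • basisVec i)) 0 ≤ 0 := by
    refine Finset.sum_nonpos fun i _ =>
      iteratedDeriv_two_nonpos_of_isLocalMax (hC.line _) ?_
    have hct : Tendsto (fun t : ℝ => p + t • basisVec i) (𝓝 0) (𝓝 p) := by
      have : Continuous (fun t : ℝ => p + t • basisVec i) := by fun_prop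
      simpa using this.tendsto 0
    have := hct.eventually hloc
    simpa [IsLocalMax, IsMaxFilter] using this
  linarith

/-! ### The interior gradient estimate -/

lemma norm_sq_E2 {i j : Fin 2} (hij : j ≠ i) (p : E2) : ‖p‖ ^ 2 = p i ^ 2 + p j ^ 2 := by
  rw [EuclideanSpace.norm_sq_eq, Fin.sum_univ_two]
  fin_cases i <;> fin_cases j <;> simp_all [add_comm]

lemma norm_reflect_sub (i : Fin 2) (x p : E2) : ‖reflect i x p - x‖ = ‖p - x‖ := by
  obtain ⟨j, hij⟩ : ∃ j : Fin 2, j ≠ i := exists_ne i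
  rw [← sq_eq_sq₀ (norm_nonneg _) (norm_nonneg _), norm_sq_E2 hij, norm_sq_E2 hij]
  simp only [PiLp.sub_apply, reflect_apply_self, reflect_apply_of_ne hij]
  ring

/-- One-sided comparison for the odd part of `u` under a reflection: on the half disc
`{|p - x| ≤ d, p i ≥ x i}`, the function `(u - u ∘ reflect) / 2` lies below the barrier
`(M / d²) (b² + 2 d a - a²) + (5 / 2) a (d - a)`, where `(a, b)` are the coordinates of `p - x`. -/
lemma odd_part_le_barrier {u : E2 → ℝ} {x : E2} {d M : ℝ} (hd : 0 < d)
    (hL : ∀ p ∈ closedBall x d, ∃ L, |L| < 5 ∧ HasLap u p L)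
    (hM : ∀ p ∈ closedBall x d, |u p| ≤ M) {i j : Fin 2} (hij : j ≠ i) (p : E2)
    (hp : p ∈ closedBall x d) (hpi : x i ≤ p i) :
    (u p - u (reflect i x p)) / 2 ≤
      M / d ^ 2 * ((p j - x j) ^ 2 + 2 * d * (p i - x i) - (p i - x i) ^ 2)
        + 5 / 2 * ((p i - x i) * d - (p i - x i) ^ 2) := by
  have hM0 : 0 ≤ M := (abs_nonneg _).trans (hM p hp)
  have hrefl : ∀ q ∈ closedBall x d, reflect i x q ∈ closedBall x d := by
    intro q hq
    rw [mem_closedBall, dist_eq_norm] at hq ⊢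
    rwa [norm_reflect_sub]
  set ψ : E2 → ℝ := fun p => M / d ^ 2 * ((p j - x j) ^ 2 + 2 * d * (p i - x i) - (p i - x i) ^ 2)
        + 5 / 2 * (d * (p i - x i) - (p i - x i) ^ 2) with hψ
  have hψL : ∀ q, HasLap ψ q (-5) := by
    intro q
    have := ((((hasLap_coord_sq j (x j) q).add ((hasLap_coord i (x i) q).const_mul (2 * d))).sub
      (hasLap_coord_sq i (x i) q)).const_mul (M / d ^ 2)).add
      ((((hasLap_coord i (x i) q).const_mul d).sub (hasLap_coord_sq i (x i) q)).const_mul (5 / 2))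
    convert this using 1
    ring
  set v : E2 → ℝ := fun p => (1 / 2) * (u p - u (reflect i x p)) - ψ p with hv
  have hvL : ∀ q ∈ closedBall x d, ∃ L > 0, HasLap v q L := by
    intro q hq
    obtain ⟨L₁, h₁, H₁⟩ := hL q hq
    obtain ⟨L₂, h₂, H₂⟩ := hL _ (hrefl q hq)
    refine ⟨_, ?_, ((H₁.sub (H₂.reflect i x)).const_mul (1 / 2)).sub (hψL q)⟩
    rw [abs_lt] at h₁ h₂
    linarith
  have hci : Continuous fun q : E2 => q i := by fun_prop
  have main := max_principle (S := closedBall x d ∩ {q | x i ≤ q i})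
    (O := ball x d ∩ {q | x i < q i}) (v := v)
    ((isCompact_closedBall x d).inter_right (isClosed_le continuous_const hci))
    (isOpen_ball.inter (isOpen_lt continuous_const hci))
    (fun q hq => ⟨ball_subset_closedBall hq.1, show x i ≤ q i from le_of_lt hq.2⟩)
    (fun q hq => by
      obtain ⟨L, -, H⟩ := hvL q hq.1
      exact H.1.continuousAt.continuousWithinAt)
    (fun q hq => hvL q (ball_subset_closedBall hq.1)) ?_ p ⟨hp, hpi⟩
  · simp only [hv, hψ] at main
    linarith
  · rintro q ⟨hq, hqi⟩ hqO
    rw [Set.mem_ofPred_eq] at hqi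
    have hqn : ‖q - x‖ ≤ d := by rwa [mem_closedBall, dist_eq_norm] at hq
    have hsq := norm_sq_E2 hij (q - x)
    simp only [PiLp.sub_apply] at hsq
    rcases hqi.eq_or_lt with h0 | hpos
    · -- on the flat part of the boundary the odd part vanishes
      have hfix : reflect i x q = q := by simp [reflect, ← h0]
      simp only [hv, hψ, hfix, ← h0]
      have : 0 ≤ M / d ^ 2 * (q j - x j) ^ 2 := by positivity
      linarith
    · -- on the arc the barrier is at least `M`
      have hqd : ‖q - x‖ = d := by
        refine le_antisymm hqn (not_lt.1 fun h => hqO ⟨?_, hpos⟩)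
        rwa [mem_ball, dist_eq_norm]
      rw [hqd] at hsq
      have ha : q i - x i ≤ d := by nlinarith [sq_nonneg (q j - x j)]
      have hψM : M ≤ ψ q := by
        have h1 : d ^ 2 ≤ (q j - x j) ^ 2 + 2 * d * (q i - x i) - (q i - x i) ^ 2 := by nlinarith
        have h2 : M = M / d ^ 2 * d ^ 2 := by field_simp
        have h3 : M / d ^ 2 * d ^ 2 ≤
            M / d ^ 2 * ((q j - x j) ^ 2 + 2 * d * (q i - x i) - (q i - x i) ^ 2) :=
          mul_le_mul_of_nonneg_left h1 (by positivity)
        have h4 : 0 ≤ d * (q i - x i) - (q i - x i) ^ 2 := by nlinarith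
        simp only [hψ]
        linarith
      have h1 := abs_le.1 (hM q hq)
      have h2 := abs_le.1 (hM _ (hrefl q hq))
      simp only [hv]
      linarith

lemma partial_deriv_le {u : E2 → ℝ} {x : E2} {d M : ℝ} (hd : 0 < d)
    (hL : ∀ p ∈ closedBall x d, ∃ L, |L| < 5 ∧ HasLap u p L)
    (hM : ∀ p ∈ closedBall x d, |u p| ≤ M) (i : Fin 2) :
    fderiv ℝ u x (basisVec i) ≤ 2 * M / d + 5 / 2 * d := by
  obtain ⟨j, hij⟩ : ∃ j : Fin 2, j ≠ i := exists_ne i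
  have hx : x ∈ closedBall x d := mem_closedBall_self hd.le
  have hM0 : 0 ≤ M := (abs_nonneg _).trans (hM x hx)
  obtain ⟨_, -, hC, -⟩ := hL x hx
  have hdiff : HasFDerivAt u (fderiv ℝ u x) x := (hC.differentiableAt (by norm_num)).hasFDerivAt
  have hline : HasDerivAt (fun t : ℝ => u (x + t • basisVec i)) (fderiv ℝ u x (basisVec i)) 0 := by
    have h1 : HasDerivAt (fun t : ℝ => x + t • basisVec i) (basisVec i) 0 := by
      simpa using ((hasDerivAt_id (0 : ℝ)).smul_const (basisVec i)).const_add x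
    exact HasFDerivAt.comp_hasDerivAt (0 : ℝ) (by simpa using hdiff) h1
  have hline' : HasDerivAt (fun t : ℝ => u (x + (-t) • basisVec i))
      (-fderiv ℝ u x (basisVec i)) 0 := by
    have h1 : HasDerivAt (fun t : ℝ => x + (-t) • basisVec i) (-basisVec i) 0 := by
      simpa using ((hasDerivAt_neg (0 : ℝ)).smul_const (basisVec i)).const_add x
    have := HasFDerivAt.comp_hasDerivAt (0 : ℝ) (f := fun t : ℝ => x + (-t) • basisVec i)
      (by simpa using hdiff) h1
    rw [map_neg] at this
    exact this
  have hg := (hline.sub hline').tendsto_slope_zero_right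
  have hle : (fderiv ℝ u x (basisVec i) - -fderiv ℝ u x (basisVec i))
      ≤ 2 * (2 * M / d + 5 / 2 * d) := by
    refine le_of_tendsto hg ?_
    filter_upwards [Ioc_mem_nhdsGT hd] with t ht
    have hp : x + t • basisVec i ∈ closedBall x d := by
      rw [mem_closedBall, dist_eq_norm]
      simp [norm_smul, abs_of_pos ht.1, ht.2]
    have h := odd_part_le_barrier hd hL hM hij (x + t • basisVec i) hp (by simp [ht.1.le])
    have hr : reflect i x (x + t • basisVec i) = x + (-t) • basisVec i := by
      simp only [reflect, PiLp.add_apply, PiLp.smul_apply, smul_eq_mul]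
      simp
      module
    rw [hr] at h
    simp [hij] at h
    have ht2 : 0 ≤ (M / d ^ 2 + 5 / 2) * t ^ 2 := by positivity
    have e : M / d ^ 2 * (2 * d * t) = t * (2 * M / d) := by field_simp
    simp only [zero_add, Pi.sub_apply, smul_eq_mul, zero_smul, neg_zero, add_zero, sub_self,
      sub_zero]
    rw [inv_mul_le_iff₀ ht.1]
    rw [neg_smul]
    nlinarith
  linarith

/-- The interior gradient estimate for functions with bounded Laplacian. -/
lemma norm_fderiv_le {u : E2 → ℝ} {x : E2} {d M : ℝ} (hd : 0 < d)
    (hL : ∀ p ∈ closedBall x d, ∃ L, |L| < 5 ∧ HasLap u p L)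
    (hM : ∀ p ∈ closedBall x d, |u p| ≤ M) :
    ‖fderiv ℝ u x‖ ≤ 2 * (2 * M / d + 5 / 2 * d) := by
  have habs : ∀ i, |fderiv ℝ u x (basisVec i)| ≤ 2 * M / d + 5 / 2 * d := by
    intro i
    refine abs_le'.2 ⟨partial_deriv_le hd hL hM i, ?_⟩
    have := partial_deriv_le (u := fun q => -u q) hd
      (fun p hp => by
        obtain ⟨L, h, H⟩ := hL p hp
        exact ⟨-L, by rwa [abs_neg], H.neg⟩)
      (fun p hp => by rw [abs_neg]; exact hM p hp) i
    have e : fderiv ℝ (fun q => -u q) x = -fderiv ℝ u x := fderiv_neg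
    rwa [e] at this
  have hK : 0 ≤ 2 * M / d + 5 / 2 * d := (abs_nonneg _).trans (habs 0)
  refine ContinuousLinearMap.opNorm_le_bound _ (by positivity) fun w => ?_
  have hw : w = w 0 • basisVec 0 + w 1 • basisVec 1 := by
    ext k; fin_cases k <;> simp
  have hn : ∀ k, |w k| ≤ ‖w‖ := fun k => by simpa using PiLp.norm_apply_le w k
  calc ‖fderiv ℝ u x w‖ = |w 0 * fderiv ℝ u x (basisVec 0) + w 1 * fderiv ℝ u x (basisVec 1)| := by
        conv_lhs => rw [hw]
        simp only [map_add, map_smul, smul_eq_mul, Real.norm_eq_abs]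
    _ ≤ |w 0| * |fderiv ℝ u x (basisVec 0)| + |w 1| * |fderiv ℝ u x (basisVec 1)| := by
        rw [← abs_mul, ← abs_mul]; exact abs_add_le _ _
    _ ≤ ‖w‖ * (2 * M / d + 5 / 2 * d) + ‖w‖ * (2 * M / d + 5 / 2 * d) := by
        gcongr <;> first | exact hn _ | exact habs _
    _ = 2 * (2 * M / d + 5 / 2 * d) * ‖w‖ := by ring

/-! ### Local bounds from harmonic approximation -/

/-- A real continuous function on the circle `|z| = ρ` is uniformly approximated there by the real
part of an entire function, because trigonometric polynomials are dense. -/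
lemma exists_entire_re_approx {u : E2 → ℝ} {ρ : ℝ} (hρ : 0 < ρ)
    (hu : ContinuousOn u (sphere 0 ρ)) {ε : ℝ} (hε : 0 < ε) :
    ∃ F : ℂ → ℂ, Differentiable ℂ F ∧
      ∀ q ∈ sphere (0 : E2) ρ, |(F ((q 0 : ℂ) + (q 1 : ℂ) * Complex.I)).re - u q| ≤ ε := by
  have : Fact (0 < 2 * π) := ⟨by positivity⟩
  have hmem : ∀ w : Circle, !₂[ρ * (w : ℂ).re, ρ * (w : ℂ).im] ∈ sphere (0 : E2) ρ := by
    intro w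
    have hw : (w : ℂ).re ^ 2 + (w : ℂ).im ^ 2 = 1 := by
      have := Circle.normSq_coe w
      rw [Complex.normSq_apply] at this
      nlinarith
    rw [mem_sphere_zero_iff_norm, ← sq_eq_sq₀ (norm_nonneg _) hρ.le,
      norm_sq_E2 (i := 0) (j := 1) (by decide)]
    simp
    nlinarith
  have hcont : Continuous fun θ : AddCircle (2 * π) =>
      ((u !₂[ρ * (AddCircle.toCircle θ : ℂ).re, ρ * (AddCircle.toCircle θ : ℂ).im] : ℝ) : ℂ) := by
    refine Complex.continuous_ofReal.comp (hu.comp_continuous ?_ fun θ => hmem _)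
    have hc : Continuous fun θ : AddCircle (2 * π) => (AddCircle.toCircle θ : ℂ) :=
      continuous_subtype_val.comp AddCircle.continuous_toCircle
    refine (PiLp.continuous_toLp 2 _).comp (continuous_pi fun k => ?_)
    fin_cases k
    · exact continuous_const.mul (Complex.continuous_re.comp hc)
    · exact continuous_const.mul (Complex.continuous_im.comp hc)
  let g : C(AddCircle (2 * π), ℂ) := ⟨_, hcont⟩
  have hg : g ∈ closure (Submodule.span ℂ (Set.range (@fourier (2 * π))) :
      Set C(AddCircle (2 * π), ℂ)) := by
    rw [← Submodule.topologicalClosure_coe, span_fourier_closure_eq_top]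
    trivial
  obtain ⟨P, hP, hPg⟩ := Metric.mem_closure_iff.1 hg ε hε
  -- every trigonometric polynomial is `F₁ + conj F₂` with entire `F₁`, `F₂`
  have hdec : ∃ F₁ F₂ : ℂ → ℂ, Differentiable ℂ F₁ ∧ Differentiable ℂ F₂ ∧
      ∀ θ : AddCircle (2 * π), P θ = F₁ (ρ * AddCircle.toCircle θ)
        + (starRingEnd ℂ) (F₂ (ρ * AddCircle.toCircle θ)) := by
    have hρ' : (ρ : ℂ) ≠ 0 := by exact_mod_cast hρ.ne'
    refine Submodule.span_induction (p := fun P _ => ∃ F₁ F₂ : ℂ → ℂ, Differentiable ℂ F₁ ∧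
      Differentiable ℂ F₂ ∧ ∀ θ : AddCircle (2 * π), P θ = F₁ (ρ * AddCircle.toCircle θ)
        + (starRingEnd ℂ) (F₂ (ρ * AddCircle.toCircle θ))) ?_ ?_ ?_ ?_ hP
    · rintro _ ⟨n, rfl⟩
      obtain ⟨m, rfl | rfl⟩ := n.eq_nat_or_neg
      · refine ⟨fun z => (z / ρ) ^ m, fun _ => 0, by fun_prop, by fun_prop, fun θ => ?_⟩
        rw [fourier_apply, AddCircle.toCircle_zsmul]
        simp [hρ']
      · refine ⟨fun _ => 0, fun z => (z / ρ) ^ m, by fun_prop, by fun_prop, fun θ => ?_⟩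
        rw [fourier_apply, AddCircle.toCircle_zsmul]
        simp [hρ', ← Circle.coe_inv_eq_conj]
    · exact ⟨fun _ => 0, fun _ => 0, by fun_prop, by fun_prop, by simp⟩
    · rintro P Q - - ⟨F₁, F₂, h₁, h₂, h⟩ ⟨G₁, G₂, k₁, k₂, k⟩
      refine ⟨fun z => F₁ z + G₁ z, fun z => F₂ z + G₂ z, by fun_prop, by fun_prop, fun θ => ?_⟩
      rw [ContinuousMap.add_apply, h, k, map_add]; ring
    · rintro c P - ⟨F₁, F₂, h₁, h₂, h⟩
      refine ⟨fun z => c * F₁ z, fun z => (starRingEnd ℂ) c * F₂ z, by fun_prop, by fun_prop,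
        fun θ => ?_⟩
      rw [ContinuousMap.smul_apply, h, map_mul, Complex.conj_conj, smul_eq_mul]; ring
  obtain ⟨F₁, F₂, h₁, h₂, h⟩ := hdec
  refine ⟨fun z => F₁ z + F₂ z, by fun_prop, fun q hq => ?_⟩
  have hqn : q 0 ^ 2 + q 1 ^ 2 = ρ ^ 2 := by
    rw [← norm_sq_E2 (i := 0) (j := 1) (by decide), mem_sphere_zero_iff_norm.1 hq]
  set z : ℂ := (q 0 : ℂ) + (q 1 : ℂ) * Complex.I with hz
  have hzn : ‖z / ρ‖ = 1 := by
    rw [norm_div, Complex.norm_real, Real.norm_eq_abs, abs_of_pos hρ, div_eq_one_iff_eq hρ.ne',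
      ← sq_eq_sq₀ (norm_nonneg _) hρ.le, Complex.sq_norm, Complex.normSq_apply, ← hqn]
    simp [hz]; ring
  let w : Circle := ⟨z / ρ, mem_sphere_zero_iff_norm.2 hzn⟩
  obtain ⟨θ, hθ⟩ : ∃ θ : AddCircle (2 * π), AddCircle.toCircle θ = w := by
    refine ⟨(AddCircle.homeomorphCircle (T := 2 * π) (by positivity)).symm w, ?_⟩
    rw [← AddCircle.homeomorphCircle_apply (by positivity)]
    simp
  have hρ' : (ρ : ℂ) ≠ 0 := by exact_mod_cast hρ.ne'
  have hθz : (ρ : ℂ) * AddCircle.toCircle θ = z := by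
    rw [hθ]
    change (ρ : ℂ) * (z / ρ) = z
    field_simp
  have hgq : g θ = (u q : ℂ) := by
    have hre : ρ * (AddCircle.toCircle θ : ℂ).re = q 0 := by
      have := congrArg Complex.re hθz
      simpa [hz] using this
    have him : ρ * (AddCircle.toCircle θ : ℂ).im = q 1 := by
      have := congrArg Complex.im hθz
      simpa [hz] using this
    change ((u !₂[ρ * (AddCircle.toCircle θ : ℂ).re,
      ρ * (AddCircle.toCircle θ : ℂ).im] : ℝ) : ℂ) = _
    rw [hre, him]
    congr 2
    ext k; fin_cases k <;> simp
  have hd : ‖g θ - P θ‖ ≤ ε := by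
    rw [← dist_eq_norm]; exact (ContinuousMap.dist_apply_le_dist θ).trans hPg.le
  have hre := (Complex.abs_re_le_norm (g θ - P θ)).trans hd
  rw [hgq, h, hθz] at hre
  simp only [Complex.sub_re, Complex.ofReal_re, Complex.add_re, Complex.conj_re] at hre
  rw [abs_sub_comm]
  simpa using hre

/-- The Harnack-type bound: a nonnegative `u` with `u 0 = 0` and Laplacian in `(0, 4]` on a disc of
radius `ρ` is at most `12 ρ²` on the concentric disc of radius `ρ / 2`. -/
lemma le_of_nonneg_of_lap {u : E2 → ℝ} {ρ : ℝ} (hρ : 0 < ρ)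
    (hL : ∀ p ∈ closedBall (0 : E2) ρ, ∃ L, 0 < L ∧ L ≤ 4 ∧ HasLap u p L)
    (hu : ∀ p ∈ closedBall (0 : E2) ρ, 0 ≤ u p) (hu0 : u 0 = 0) :
    ∀ p ∈ closedBall (0 : E2) (ρ / 2), u p ≤ 12 * ρ ^ 2 := by
  have hc : ContinuousOn u (closedBall 0 ρ) := fun p hp => by
    obtain ⟨L, -, -, H⟩ := hL p hp
    exact H.1.continuousAt.continuousWithinAt
  have hε : 0 < ρ ^ 2 := by positivity
  obtain ⟨F, hF, hFu⟩ := exists_entire_re_approx hρ (hc.mono sphere_subset_closedBall) hε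
  set toC : E2 → ℂ := fun q => (q 0 : ℂ) + (q 1 : ℂ) * Complex.I with htoC
  have hnorm : ∀ q, ‖toC q‖ = ‖q‖ := by
    intro q
    rw [← sq_eq_sq₀ (norm_nonneg _) (norm_nonneg _), norm_sq_E2 (i := 0) (j := 1) (by decide),
      Complex.sq_norm, Complex.normSq_apply]
    simp [htoC]; ring
  have hsurj : ∀ z : ℂ, ∃ q, toC q = z := by
    intro z
    exact ⟨!₂[z.re, z.im], by simp [htoC, Complex.re_add_im]⟩
  have hFL : ∀ p, HasLap (fun q => (F (toC q)).re) p 0 := hasLap_re_of_differentiable hF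
  have hbdry : ∀ q ∈ closedBall (0 : E2) ρ, q ∉ ball (0 : E2) ρ → q ∈ sphere (0 : E2) ρ := by
    intro q hq hqb
    rw [mem_sphere]
    rw [mem_closedBall] at hq
    rw [mem_ball, not_lt] at hqb
    exact le_antisymm hq hqb
  -- subharmonicity: `u ≤ h + ρ²`, where `h` is the harmonic function `Re F`
  have hupper : ∀ p ∈ closedBall (0 : E2) ρ, u p - (F (toC p)).re - ρ ^ 2 ≤ 0 := by
    refine max_principle (O := ball 0 ρ) (isCompact_closedBall _ _) isOpen_ball
      ball_subset_closedBall ?_ ?_ ?_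
    · intro p hp
      exact ((hc p hp).sub (hFL p).1.continuousAt.continuousWithinAt).sub continuousWithinAt_const
    · intro p hp
      obtain ⟨L, h1, -, H⟩ := hL p (ball_subset_closedBall hp)
      exact ⟨_, by linarith, (H.sub (hFL p)).sub (hasLap_const (ρ ^ 2) p)⟩
    · intro q hq hq'
      have := abs_le.1 (hFu q (hbdry q hq hq'))
      simp only [htoC]; linarith
  -- `u - 2|x|²` is superharmonic, which bounds `h 0` from above
  have hlower : ∀ p ∈ closedBall (0 : E2) ρ,
      (F (toC p)).re - u p + 2 * ((p 0 - 0) ^ 2 + (p 1 - 0) ^ 2) - 3 * ρ ^ 2 ≤ 0 := by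
    have hlap : ∀ p ∈ closedBall (0 : E2) ρ, ∃ L > 0, HasLap (fun p : E2 =>
        (F (toC p)).re - u p + 2 * ((p 0 - 0) ^ 2 + (p 1 - 0) ^ 2) - 3 * ρ ^ 2) p L := by
      intro p hp
      obtain ⟨L, -, h1, H⟩ := hL p hp
      exact ⟨_, by linarith, (((hFL p).sub H).add (((hasLap_coord_sq 0 0 p).add
        (hasLap_coord_sq 1 0 p)).const_mul 2)).sub (hasLap_const (3 * ρ ^ 2) p)⟩
    refine max_principle (O := ball 0 ρ) (isCompact_closedBall _ _) isOpen_ball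
      ball_subset_closedBall ?_ ?_ ?_
    · intro p hp
      obtain ⟨L, -, H⟩ := hlap p hp
      exact H.1.continuousAt.continuousWithinAt
    · exact fun p hp => hlap p (ball_subset_closedBall hp)
    · intro q hq hq'
      have hs := hbdry q hq hq'
      have h1 := abs_le.1 (hFu q hs)
      have h2 : q 0 ^ 2 + q 1 ^ 2 = ρ ^ 2 := by
        rw [← norm_sq_E2 (i := 0) (j := 1) (by decide), mem_sphere_zero_iff_norm.1 hs]
      simp only [htoC, sub_zero, h2]; linarith
  have hz0 : toC 0 = 0 := by simp [htoC]
  have h0mem : (0 : E2) ∈ closedBall (0 : E2) ρ := mem_closedBall_self hρ.le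
  have hF0 : |(F 0).re| ≤ 3 * ρ ^ 2 := by
    have h1 := hupper 0 h0mem
    have h2 := hlower 0 h0mem
    rw [hz0, hu0] at h1 h2
    simp at h1 h2
    rw [abs_le]; constructor <;> linarith
  intro p hp
  have hp' : ‖toC p‖ ≤ ρ / 2 := by rw [hnorm]; simpa using hp
  -- Borel–Carathéodory applied to `-F`, normalised to be real at the origin
  have hBC := Complex.borelCaratheodory (f := fun z => -F z + ((F 0).im : ℂ) * Complex.I)
    (M := ρ ^ 2) (R := ρ) (z := toC p) hε (by fun_prop) (by
      intro z hz
      obtain ⟨q, rfl⟩ := hsurj z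
      have hq : q ∈ closedBall (0 : E2) ρ := by
        rw [mem_ball_zero_iff, hnorm] at hz
        rw [mem_closedBall_zero_iff]; exact hz.le
      have h1 := hupper q hq
      have h2 := hu q hq
      simp; linarith) hρ (by rw [mem_ball_zero_iff]; linarith)
  have hf0 : ‖-F 0 + ((F 0).im : ℂ) * Complex.I‖ ≤ 3 * ρ ^ 2 := by
    have : -F 0 + ((F 0).im : ℂ) * Complex.I = ((-(F 0).re : ℝ) : ℂ) := by
      apply Complex.ext <;> simp
    rw [this, Complex.norm_real, Real.norm_eq_abs, abs_neg]; exact hF0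
  have hden : ρ / 2 ≤ ρ - ‖toC p‖ := by linarith
  have hden0 : 0 < ρ - ‖toC p‖ := by linarith
  have t1 : 2 * ρ ^ 2 * ‖toC p‖ / (ρ - ‖toC p‖) ≤ 2 * ρ ^ 2 := by
    rw [div_le_iff₀ hden0]; nlinarith
  have t2 : ‖-F 0 + ((F 0).im : ℂ) * Complex.I‖ * (ρ + ‖toC p‖) / (ρ - ‖toC p‖) ≤ 9 * ρ ^ 2 := by
    rw [div_le_iff₀ hden0]
    calc ‖-F 0 + ((F 0).im : ℂ) * Complex.I‖ * (ρ + ‖toC p‖)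
        ≤ (3 * ρ ^ 2) * (ρ + ‖toC p‖) := by gcongr
      _ ≤ 9 * ρ ^ 2 * (ρ - ‖toC p‖) := by nlinarith
  have hre := (neg_le_abs _).trans ((Complex.abs_re_le_norm _).trans hBC)
  have h3 := hupper p (closedBall_subset_closedBall (by linarith) hp)
  simp at hre
  linarith

/-! ### Compactness -/

/-- Arzelà–Ascoli on the balls exhausting `ℝ²`, for a sequence that is bounded and Lipschitz on
each ball from some index on. -/
lemma exists_subseq_uniformCauchySeqOn {T : ℕ → E2 → ℝ}
    (hT : ∀ ρ > 0, ∃ N : ℕ, ∃ C : ℝ, ∀ n ≥ N, (∀ x ∈ closedBall (0 : E2) ρ, |T n x| ≤ C) ∧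
      ∀ x ∈ closedBall (0 : E2) ρ, ∀ y ∈ closedBall (0 : E2) ρ, |T n x - T n y| ≤ C * dist x y) :
    ∃ φ : ℕ → ℕ, StrictMono φ ∧
      ∀ ρ > 0, UniformCauchySeqOn (fun n => T (φ n)) atTop (closedBall 0 ρ) := by
  let q : ℕ → E2 := TopologicalSpace.denseSeq E2
  have hq : ∀ k, ∃ N : ℕ, ∃ C : ℝ, ∀ n ≥ N, |T n (q k)| ≤ C := by
    intro k
    obtain ⟨N, C, h⟩ := hT (‖q k‖ + 1) (by positivity)
    exact ⟨N, C, fun n hn => (h n hn).1 _ (by simp)⟩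
  choose N C hNC using hq
  -- diagonal extraction on the dense sequence, by sequential compactness of a countable product
  let a : ℕ → ℕ → ℝ := fun n k => if N k ≤ n then T n (q k) else 0
  have ha : ∀ n, a n ∈ Set.univ.pi fun k => Set.Icc (-|C k|) |C k| := by
    intro n k _
    by_cases h : N k ≤ n
    · simp only [a, h, if_true]
      exact abs_le.1 ((hNC k n h).trans (le_abs_self _))
    · simp [a, h]
  obtain ⟨b, -, φ, hφ, hlim⟩ :=
    (isCompact_univ_pi fun k => isCompact_Icc (a := -|C k|) (b := |C k|)).tendsto_subseq ha
  rw [tendsto_pi_nhds] at hlim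
  have hconv : ∀ k, Tendsto (fun n => T (φ n) (q k)) atTop (𝓝 (b k)) := by
    intro k
    refine (hlim k).congr' ?_
    filter_upwards [eventually_ge_atTop (N k)] with n hn
    simp [a, hn.trans (hφ.id_le n)]
  refine ⟨φ, hφ, fun ρ hρ => ?_⟩
  rw [Metric.uniformCauchySeqOn_iff]
  intro ε hε
  obtain ⟨N₀, C₀, h₀⟩ := hT (ρ + 1) (by positivity)
  have hC₀ : 0 ≤ C₀ := (abs_nonneg _).trans ((h₀ N₀ le_rfl).1 0 (by simp; linarith))
  set δ : ℝ := min 1 (ε / (4 * (C₀ + 1))) with hδ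
  have hδ0 : 0 < δ := by positivity
  have hCδ : C₀ * δ ≤ ε / 4 := by
    calc C₀ * δ ≤ (C₀ + 1) * (ε / (4 * (C₀ + 1))) := by
          gcongr
          · linarith
          · exact min_le_right _ _
      _ = ε / 4 := by field_simp
  obtain ⟨s, hs⟩ := (isCompact_closedBall (0 : E2) ρ).elim_finite_subcover
    (fun k => ball (q k) δ) (fun _ => isOpen_ball) (fun x _ => by
      obtain ⟨k, hk⟩ := (TopologicalSpace.denseRange_denseSeq E2).exists_dist_lt x hδ0
      exact Set.mem_iUnion.2 ⟨k, hk⟩)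
  have hev : ∀ᶠ n in atTop, ∀ k ∈ s, dist (T (φ n) (q k)) (b k) < ε / 4 := by
    rw [Filter.eventually_all_finset]
    exact fun k _ => (Metric.tendsto_nhds.1 (hconv k)) _ (by positivity)
  obtain ⟨N₁, hN₁⟩ := eventually_atTop.1 hev
  refine ⟨max N₀ N₁, fun m hm n hn x hx => ?_⟩
  obtain ⟨k, hk, hxk⟩ : ∃ k ∈ s, x ∈ ball (q k) δ := by simpa using hs hx
  rw [mem_ball] at hxk
  have hx1 : x ∈ closedBall (0 : E2) (ρ + 1) := closedBall_subset_closedBall (by linarith) hx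
  have hq1 : q k ∈ closedBall (0 : E2) (ρ + 1) := by
    rw [mem_closedBall] at hx ⊢
    have := dist_triangle (q k) x 0
    rw [dist_comm (q k) x] at this
    have := min_le_left 1 (ε / (4 * (C₀ + 1)))
    linarith
  have hlip : ∀ l ≥ max N₀ N₁, |T (φ l) x - T (φ l) (q k)| ≤ ε / 4 := by
    intro l hl
    refine ((h₀ (φ l) (((le_max_left _ _).trans hl).trans (hφ.id_le l))).2 x hx1 _ hq1).trans ?_
    exact (mul_le_mul_of_nonneg_left hxk.le hC₀).trans hCδ
  have hm1 := abs_le.1 (hlip m hm)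
  have hn1 := abs_le.1 (hlip n hn)
  have hm2 := hN₁ m ((le_max_right _ _).trans hm) k hk
  have hn2 := hN₁ n ((le_max_right _ _).trans hn) k hk
  rw [Real.dist_eq, abs_lt] at hm2 hn2 ⊢
  constructor <;> linarith

/-- compactness: nonnegative `C²` functions vanishing at `0` whose
(positive) Laplacian of `-τ_p` lies in `(0,4]` on balls of radii `R_p → ∞`
subconverge in `C¹_loc(ℝ²)` to some `τ_∞ ≥ 0` with `τ_∞(0)=0`. -/
theorem compactness_C1loc
    (R : ℕ → ℝ) (hR : Tendsto R atTop atTop)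
    (τ : ℕ → E2 → ℝ)
    (hC2 : ∀ n, ContDiffOn ℝ 2 (τ n) (Metric.ball 0 (R n)))
    (hnonneg : ∀ n, ∀ x ∈ Metric.ball (0:E2) (R n), 0 ≤ τ n x)
    (h0 : ∀ n, τ n 0 = 0)
    (hlap : ∀ n, ∀ x ∈ Metric.ball (0:E2) (R n),
      0 < posLap (fun z => -τ n z) x ∧ posLap (fun z => -τ n z) x ≤ 4) :
    ∃ φ : ℕ → ℕ, StrictMono φ ∧ ∃ τlim : E2 → ℝ,
      ContDiff ℝ 1 τlim ∧ (∀ y, 0 ≤ τlim y) ∧ τlim 0 = 0 ∧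
      ∀ K : Set E2, IsCompact K →
        TendstoUniformlyOn (fun n => τ (φ n)) τlim atTop K ∧
        TendstoUniformlyOn (fun n => gradient (τ (φ n))) (gradient τlim) atTop K := by
  have hL : ∀ n, ∀ x ∈ ball (0 : E2) (R n), ∃ L, 0 < L ∧ L ≤ 4 ∧ HasLap (τ n) x L := by
    intro n x hx
    have h := hlap n x hx
    have e : posLap (fun z => -τ n z) x
        = ∑ i : Fin 2, iteratedDeriv 2 (fun t : ℝ => τ n (x + t • basisVec i)) 0 := by
      rw [posLap, ← Finset.sum_neg_distrib]
      refine Finset.sum_congr rfl fun i _ => ?_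
      have : iteratedDeriv 2 (fun t : ℝ => -τ n (x + t • basisVec i)) 0
          = -iteratedDeriv 2 (fun t : ℝ => τ n (x + t • basisVec i)) 0 := iteratedDeriv_neg 2 _ _
      rw [this, neg_neg]
    rw [e] at h
    exact ⟨_, h.1, h.2, (hC2 n).contDiffAt (isOpen_ball.mem_nhds hx), rfl⟩
  have hRev : ∀ ρ : ℝ, ∃ N : ℕ, ∀ n ≥ N, closedBall (0 : E2) ρ ⊆ ball 0 (R n) := by
    intro ρ
    obtain ⟨N, hN⟩ := eventually_atTop.1 (hR.eventually_gt_atTop ρ)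
    exact ⟨N, fun n hn => closedBall_subset_ball (hN n hn)⟩
  have hsub : ∀ {x : E2} {ρ d : ℝ}, x ∈ closedBall (0 : E2) ρ →
      closedBall x d ⊆ closedBall (0 : E2) (ρ + d) := by
    intro x ρ d hx
    refine closedBall_subset_closedBall' ?_
    rw [mem_closedBall] at hx; linarith
  have hdiffAt : ∀ n, ∀ x ∈ ball (0 : E2) (R n), DifferentiableAt ℝ (τ n) x := by
    intro n x hx
    obtain ⟨L, -, -, H⟩ := hL n x hx
    exact H.1.differentiableAt (by norm_num)
  obtain ⟨φ, hφ, hcauchy⟩ := exists_subseq_uniformCauchySeqOn (T := τ) (by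
    intro ρ hρ
    obtain ⟨N, hN⟩ := hRev (4 * ρ)
    set M : ℝ := 12 * (4 * ρ) ^ 2 with hM
    set G : ℝ := 2 * (2 * M / ρ + 5 / 2 * ρ) with hG
    have hM0 : 0 ≤ M := by positivity
    have hG0 : 0 ≤ G := by positivity
    refine ⟨N, M + G, fun n hn => ?_⟩
    have hbd : ∀ x ∈ closedBall (0 : E2) (2 * ρ), |τ n x| ≤ M := by
      intro x hx
      have hx4 : x ∈ closedBall (0 : E2) (4 * ρ) :=
        closedBall_subset_closedBall (by linarith) hx
      rw [abs_of_nonneg (hnonneg n x (hN n hn hx4))]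
      refine le_of_nonneg_of_lap (by positivity) (fun p hp => hL n p (hN n hn hp))
        (fun p hp => hnonneg n p (hN n hn hp)) (h0 n) x ?_
      convert hx using 2; ring
    have hgr : ∀ x ∈ closedBall (0 : E2) ρ, ‖fderiv ℝ (τ n) x‖ ≤ G := by
      intro x hx
      have hs : closedBall x ρ ⊆ closedBall (0 : E2) (2 * ρ) := by
        rw [two_mul]; exact hsub hx
      refine norm_fderiv_le hρ (fun p hp => ?_) (fun p hp => hbd p (hs hp))
      obtain ⟨L, h1, h2, H⟩ := hL n p
        (hN n hn (closedBall_subset_closedBall (by linarith) (hs hp)))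
      exact ⟨L, by rw [abs_lt]; constructor <;> linarith, H⟩
    refine ⟨fun x hx => ?_, fun x hx y hy => ?_⟩
    · have := hbd x (closedBall_subset_closedBall (by linarith) hx)
      linarith
    · have := (convex_closedBall (0 : E2) ρ).norm_image_sub_le_of_norm_fderiv_le (𝕜 := ℝ)
        (fun z hz => hdiffAt n z
          (hN n hn (closedBall_subset_closedBall (by linarith) hz))) hgr hy hx
      rw [Real.norm_eq_abs, ← dist_eq_norm] at this
      refine this.trans ?_
      gcongr
      linarith)
  have hRφ : ∀ ρ : ℝ, ∃ N : ℕ, ∀ n ≥ N, closedBall (0 : E2) ρ ⊆ ball 0 (R (φ n)) := by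
    intro ρ
    obtain ⟨N, hN⟩ := hRev ρ
    exact ⟨N, fun n hn => hN _ (hn.trans (hφ.id_le n))⟩
  -- the gradient estimate for differences, with `d` small, upgrades uniform Cauchy to `C¹`
  have hcauchy' : ∀ ρ > 0, UniformCauchySeqOn (fun n => fderiv ℝ (τ (φ n))) atTop
      (closedBall 0 ρ) := by
    intro ρ hρ
    rw [Metric.uniformCauchySeqOn_iff]
    intro ε hε
    set d : ℝ := ε / 10 with hd
    have hd0 : 0 < d := by positivity
    obtain ⟨N₁, hN₁⟩ := Metric.uniformCauchySeqOn_iff.1 (hcauchy (ρ + d) (by positivity))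
      (ε * d / 16) (by positivity)
    obtain ⟨N₂, hN₂⟩ := hRφ (ρ + d)
    refine ⟨max N₁ N₂, fun m hm n hn x hx => ?_⟩
    have hm1 := (le_max_left _ _).trans hm
    have hm2 := (le_max_right _ _).trans hm
    have hn1 := (le_max_left _ _).trans hn
    have hn2 := (le_max_right _ _).trans hn
    have hx' : x ∈ closedBall (0 : E2) (ρ + d) := hsub hx (mem_closedBall_self hd0.le)
    have key := norm_fderiv_le (u := fun p => τ (φ m) p - τ (φ n) p) (x := x) hd0
      (M := ε * d / 16) (fun p hp => by
        obtain ⟨L, h1, h2, H⟩ := hL _ p (hN₂ m hm2 (hsub hx hp))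
        obtain ⟨L', h1', h2', H'⟩ := hL _ p (hN₂ n hn2 (hsub hx hp))
        exact ⟨L - L', by rw [abs_lt]; constructor <;> linarith, H.sub H'⟩)
      (fun p hp => (hN₁ m hm1 n hn1 p (hsub hx hp)).le)
    have e : fderiv ℝ (fun p => τ (φ m) p - τ (φ n) p) x
        = fderiv ℝ (τ (φ m)) x - fderiv ℝ (τ (φ n)) x :=
      fderiv_fun_sub (hdiffAt _ x (hN₂ m hm2 hx')) (hdiffAt _ x (hN₂ n hn2 hx'))
    rw [e] at key
    rw [dist_eq_norm]
    refine key.trans_lt ?_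
    have : 2 * (ε * d / 16) / d = ε / 8 := by field_simp; norm_num
    rw [this]
    linarith
  have hmem : ∀ x : E2, x ∈ closedBall (0 : E2) (‖x‖ + 1) := fun x => by simp
  have hpt : ∀ x, ∃ l, Tendsto (fun n => τ (φ n) x) atTop (𝓝 l) := fun x =>
    cauchySeq_tendsto_of_complete ((hcauchy (‖x‖ + 1) (by positivity)).cauchySeq (hmem x))
  have hpt' : ∀ x, ∃ l, Tendsto (fun n => fderiv ℝ (τ (φ n)) x) atTop (𝓝 l) := fun x =>
    cauchySeq_tendsto_of_complete ((hcauchy' (‖x‖ + 1) (by positivity)).cauchySeq (hmem x))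
  choose τlim hlim using hpt
  choose g hg using hpt'
  have hunif : ∀ ρ > 0, TendstoUniformlyOn (fun n => τ (φ n)) τlim atTop (closedBall 0 ρ) :=
    fun ρ hρ => (hcauchy ρ hρ).tendstoUniformlyOn_of_tendsto fun x _ => hlim x
  have hunif' : ∀ ρ > 0, TendstoUniformlyOn (fun n => fderiv ℝ (τ (φ n))) g atTop
      (closedBall 0 ρ) :=
    fun ρ hρ => (hcauchy' ρ hρ).tendstoUniformlyOn_of_tendsto fun x _ => hg x
  have hnhds : ∀ x : E2, closedBall (0 : E2) (‖x‖ + 1) ∈ 𝓝 x := fun x =>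
    mem_of_superset (isOpen_ball.mem_nhds (by simp)) ball_subset_closedBall
  have hderiv : ∀ x, HasFDerivAt τlim (g x) x := by
    intro x
    refine hasFDerivAt_of_tendstoUniformlyOnFilter (l := atTop)
      (f := fun n => τ (φ n)) (f' := fun n => fderiv ℝ (τ (φ n)))
      ((hunif' (‖x‖ + 1) (by positivity)).tendstoUniformlyOnFilter.mono_right
        (le_principal_iff.2 (hnhds x))) ?_ (Eventually.of_forall hlim)
    obtain ⟨N, hN⟩ := hRφ (‖x‖ + 1)
    filter_upwards [prod_mem_prod (eventually_ge_atTop N) (hnhds x)] with ⟨n, y⟩ h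
    exact (hdiffAt _ y (hN n h.1 h.2)).hasFDerivAt
  have hgc : Continuous g := by
    rw [continuous_iff_continuousAt]
    intro x
    refine ContinuousOn.continuousAt ?_ (hnhds x)
    refine (hunif' (‖x‖ + 1) (by positivity)).continuousOn ?_
    obtain ⟨N, hN⟩ := hRφ (‖x‖ + 1)
    refine (eventually_ge_atTop N).frequently.mono fun n hn => ?_
    exact ((hC2 (φ n)).continuousOn_fderiv_of_isOpen isOpen_ball (by norm_num)).mono (hN n hn)
  have hfd : fderiv ℝ τlim = g := funext fun x => (hderiv x).fderiv
  refine ⟨φ, hφ, τlim, ?_, ?_, ?_, ?_⟩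
  · rw [contDiff_one_iff_fderiv, hfd]
    exact ⟨fun x => (hderiv x).differentiableAt, hgc⟩
  · intro y
    obtain ⟨N, hN⟩ := hRφ (‖y‖ + 1)
    refine ge_of_tendsto (hlim y) ?_
    filter_upwards [eventually_ge_atTop N] with n hn
    exact hnonneg _ y (hN n hn (hmem y))
  · refine tendsto_nhds_unique (hlim 0) ?_
    simp [h0]
  · intro K hK
    obtain ⟨ρ, hρ, hKρ⟩ := hK.isBounded.subset_closedBall_lt 0 (0 : E2)
    refine ⟨(hunif ρ hρ).mono hKρ, ?_⟩
    have h := (hunif' ρ hρ).mono hKρ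
    rw [Metric.tendstoUniformlyOn_iff] at h ⊢
    intro ε hε
    filter_upwards [h ε hε] with n hn x hx
    simp only [gradient]
    rw [LinearIsometryEquiv.dist_map, hfd]
    exact hn x hx
end

section
/- Suppose τ_p → τ_∞ = log(1+|·|²) in C⁰_loc(ℝ²), u_p(y_p + μ_p y) = M_p(1 - 2τ_p(y)/p), μ_p² p M_p^{p-1} = 8, M_p → m > 0, and p∫_Ω |∇u_p|² dx ≤ C for all p. Then ∫_{ℝ²} e^{-2τ_∞} dy < ∞, and moreover 8 m² ∫_{ℝ²} 4 e^{-2τ_∞} dy/(8) ≤ C; explicitly, 8π m² ≤ lim inf p∫_Ω|∇u_p|² dx. -/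
/-!
The limit profile satisfies `e^{-2 τlim} = (1 + |z|²)⁻²`, which is integrable on the plane with
integral `π` by polar coordinates.

For the energy bound, testing `posLap u = u ^ p` with a truncation `φ(u)` that vanishes for
`u ≤ δ`, has slope in `[0, 1]`, and satisfies `φ(t) ≥ t - 2δ` gives
`∫_Ω |∇u|² ≥ ∫ φ'(u) |∇u|² = ∫ φ(u) u ^ p` (`setIntegral_le_energy`). Truncating makes the test
function compactly supported, so an arbitrary bounded open set is allowed; only this inequality is
needed. The right-hand side is then restricted to the ball of radius `R μ` around `y`, which lies in
`Ω` once `u` is positive on it (`rescaled_ball_subset`). In rescaled coordinates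
`u = M (1 - 2τ/p)`, and `(1 - 2τ/p) ^ p` is bounded below by `e^{-δ} (1 + |z|²)⁻²` uniformly on the
ball for large `n` (`eventually_profile`). With `p μ² M ^ (p - 1) = 8` this yields
`p ∫_Ω |∇u|² ≥ 8 M (M (1 - δ) - 2δ) e^{-δ} ∫_{|z| ≤ R} (1 + |z|²)⁻²` (`energy_ge`). Letting
`n → ∞`, then `δ → 0`, then `R → ∞` gives `8 π m²`.
-/

open Real MeasureTheory Filter Metric

/-! ### Truncation -/

/-- A `C¹` truncation of the identity: it vanishes up to the level `ε`, has slope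
`1 - ε² / t² ∈ [0, 1)` beyond it, and stays above `t - 2ε`. -/
noncomputable def cutoff (ε t : ℝ) : ℝ := if t ≤ ε then 0 else (t - ε) ^ 2 / t

lemma cutoff_of_le {ε t : ℝ} (h : ε ≤ t) : cutoff ε t = (t - ε) ^ 2 / t := by
  unfold cutoff
  split_ifs with h'
  · simp [le_antisymm h' h]
  · rfl

lemma hasDerivAt_cutoff {ε t : ℝ} (hε : 0 < ε) (h : ε ≤ t) :
    HasDerivAt (cutoff ε) (1 - ε ^ 2 / t ^ 2) t := by
  have ht : 0 < t := hε.trans_le h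
  have key : HasDerivAt (fun s => (s - ε) ^ 2 / s) (1 - ε ^ 2 / t ^ 2) t := by
    refine ((((hasDerivAt_id' t).sub_const ε).pow 2).div (hasDerivAt_id' t) ht.ne').congr_deriv ?_
    simp only [Pi.pow_apply]
    push_cast
    field_simp
    ring
  rcases h.eq_or_lt with rfl | h
  · have hl : HasDerivWithinAt (cutoff ε) (1 - ε ^ 2 / ε ^ 2) (Set.Iic ε) ε := by
      rw [div_self (by positivity), sub_self]
      exact (hasDerivWithinAt_const ε _ (0 : ℝ)).congr (fun s hs => if_pos hs) (if_pos le_rfl)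
    have hr : HasDerivWithinAt (cutoff ε) (1 - ε ^ 2 / ε ^ 2) (Set.Ici ε) ε :=
      key.hasDerivWithinAt.congr (fun s hs => cutoff_of_le hs) (cutoff_of_le le_rfl)
    have := hl.union hr
    rwa [Set.Iic_union_Ici, hasDerivWithinAt_univ] at this
  · refine key.congr_of_eventuallyEq ?_
    filter_upwards [lt_mem_nhds h] with s hs using cutoff_of_le hs.le

/-! ### Gradient and Laplacian -/

/-- The squared length of the gradient in coordinates. -/
lemma norm_gradient_sq (u : E2 → ℝ) (x : E2) :
    ‖gradient u x‖ ^ 2 = ∑ i : Fin 2, (fderiv ℝ u x (EuclideanSpace.single i 1)) ^ 2 := by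
  rw [EuclideanSpace.norm_sq_eq]
  refine Finset.sum_congr rfl fun i _ => ?_
  have : gradient u x i = fderiv ℝ u x (EuclideanSpace.single i 1) := by
    rw [← InnerProductSpace.toDual_symm_apply (𝕜 := ℝ), EuclideanSpace.inner_single_right]
    simp [gradient]
  rw [this, Real.norm_eq_abs, sq_abs]

/-- On an open set where `u` is `C²`, the pure second difference in `posLap` is a repeated
directional derivative. -/
lemma posLap_eq {Ω : Set E2} (hΩ : IsOpen Ω) {u : E2 → ℝ} (hu : ContDiffOn ℝ 2 u Ω) {x : E2}
    (hx : x ∈ Ω) :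
    posLap u x = -∑ i : Fin 2, fderiv ℝ (fun z => fderiv ℝ u z (EuclideanSpace.single i 1)) x
      (EuclideanSpace.single i 1) := by
  unfold posLap
  congr 1
  refine Finset.sum_congr rfl fun i _ => ?_
  set e : E2 := EuclideanSpace.single i 1
  have hline : ∀ t : ℝ, HasDerivAt (fun t : ℝ => x + t • e) e t := fun t => by
    simpa using ((hasDerivAt_id t).smul_const e).const_add x
  rw [iteratedDeriv_succ, iteratedDeriv_one]
  have hev : deriv (fun t : ℝ => u (x + t • e)) =ᶠ[nhds 0] fun t => fderiv ℝ u (x + t • e) e := by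
    have : ∀ᶠ t : ℝ in nhds 0, x + t • e ∈ Ω :=
      (hline 0).continuousAt.eventually_mem (hΩ.mem_nhds (by simpa using hx))
    filter_upwards [this] with t ht
    exact (((hu.contDiffAt (hΩ.mem_nhds ht)).differentiableAt
      (by norm_num)).hasFDerivAt.comp_hasDerivAt t (hline t)).deriv
  rw [hev.deriv_eq]
  have hd : DifferentiableAt ℝ (fun z => fderiv ℝ u z e) (x + (0 : ℝ) • e) := by
    have h1 : ContDiffAt ℝ 1 (fderiv ℝ u) (x + (0 : ℝ) • e) :=
      (hu.contDiffAt (hΩ.mem_nhds (by simpa using hx))).fderiv_right (by norm_num)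
    exact (h1.differentiableAt (by norm_num)).clm_apply (differentiableAt_const _)
  have := (hd.hasFDerivAt.comp_hasDerivAt (0 : ℝ) (hline 0)).deriv
  simpa [Function.comp_def] using this

/-- `C²` regularity up to the boundary of a bounded set gives a square integrable gradient, so that
the energy integral below is never a junk value. -/
lemma integrableOn_gradient_sq {Ω : Set E2} (hΩ : IsOpen Ω) (hb : Bornology.IsBounded Ω)
    {u : E2 → ℝ} (hu : ContDiffOn ℝ 2 u (closure Ω)) :
    IntegrableOn (fun x => ‖gradient u x‖ ^ 2) Ω := by
  have hK : IsCompact (closure Ω) := hb.isCompact_closure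
  have hcont : ContinuousOn (fun x => ‖gradient u x‖ ^ 2) Ω := by
    have := (hu.mono subset_closure).continuousOn_fderiv_of_isOpen hΩ (by norm_num)
    exact (((InnerProductSpace.toDual ℝ E2).symm.continuous.comp_continuousOn this).norm).pow 2
  -- Near each point of the closure, `fderiv ℝ u` agrees on `Ω` with a derivative within the closure
  -- that is continuous at that point, hence is locally bounded; compactness makes this global.
  obtain ⟨B, hB⟩ : ∃ B : ℝ, ∀ x ∈ closure Ω ∩ Ω, ‖fderiv ℝ u x‖ ≤ B := by
    refine hK.induction_on (p := fun s => ∃ B : ℝ, ∀ x ∈ s ∩ Ω, ‖fderiv ℝ u x‖ ≤ B)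
      ⟨0, by simp⟩ (fun s t hst ⟨B, hB⟩ => ⟨B, fun x hx => hB x ⟨hst hx.1, hx.2⟩⟩)
      (fun s t ⟨B, hB⟩ ⟨B', hB'⟩ => ⟨max B B', ?_⟩) ?_
    · rintro x ⟨hx | hx, hxΩ⟩
      · exact (hB x ⟨hx, hxΩ⟩).trans (le_max_left _ _)
      · exact (hB' x ⟨hx, hxΩ⟩).trans (le_max_right _ _)
    · intro x hx
      obtain ⟨v, hv, -, -, f', hf'v, hf'⟩ := (contDiffWithinAt_succ_iff_hasFDerivWithinAt' (n := 1)
        (by norm_num)).1 (by simpa [one_add_one_eq_two] using hu x hx)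
      rw [Set.insert_eq_of_mem hx] at hv
      have hlt : ∀ᶠ z in nhdsWithin x (closure Ω), ‖f' z‖ < ‖f' x‖ + 1 :=
        hf'.continuousWithinAt.norm.eventually_lt_const (by linarith)
      refine ⟨{z | z ∈ v ∧ ‖f' z‖ < ‖f' x‖ + 1}, Filter.inter_mem hv hlt, ‖f' x‖ + 1, ?_⟩
      rintro z ⟨⟨hzv, hz⟩, hzΩ⟩
      rw [((hf'v z hzv).hasFDerivAt
        (mem_of_superset (hΩ.mem_nhds hzΩ) subset_closure)).fderiv]
      exact hz.le
  refine IntegrableOn.of_bound (C := B ^ 2) hb.measure_lt_top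
    ?_ ?_
  · exact hcont.aestronglyMeasurable hΩ.measurableSet
  filter_upwards [ae_restrict_mem hΩ.measurableSet] with x hx
  have h1 := hB x ⟨subset_closure hx, hx⟩
  have : ‖gradient u x‖ = ‖fderiv ℝ u x‖ := by simp [gradient]
  rw [this, norm_pow, norm_norm]
  gcongr

/-! ### Integration by parts -/

/-- Testing `posLap u = u ^ q` with `cutoff ε (u)`. The superlevel set `{ε ≤ u}` is a compact subset
of `Ω` because `u` vanishes on the frontier, so the test function has compact support in `Ω` and the
integration by parts needs no regularity of the boundary. The slope of `cutoff ε` is at most `1`,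
which gives the inequality. -/
lemma setIntegral_le_energy {Ω : Set E2} (hΩ : IsOpen Ω) (hb : Bornology.IsBounded Ω)
    {u : E2 → ℝ} (hu : ContDiffOn ℝ 2 u (closure Ω)) (hbd : ∀ x ∈ frontier Ω, u x = 0) {q : ℝ}
    (hpde : ∀ x ∈ Ω, posLap u x = u x ^ q) {ε : ℝ} (hε : 0 < ε) :
    IntegrableOn (fun x => (u x - ε) ^ 2 / u x * u x ^ q) (closure Ω ∩ {x | ε ≤ u x}) ∧
    ∫ x in closure Ω ∩ {x | ε ≤ u x}, (u x - ε) ^ 2 / u x * u x ^ q ≤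
      ∫ x in Ω, ‖gradient u x‖ ^ 2 := by
  set K := closure Ω ∩ {x | ε ≤ u x} with hKdef
  have huΩ : ContDiffOn ℝ 2 u Ω := hu.mono subset_closure
  have hKcl : IsClosed K :=
    hu.continuousOn.preimage_isClosed_of_isClosed isClosed_closure isClosed_Ici
  have hKc : IsCompact K := hb.isCompact_closure.of_isClosed_subset hKcl Set.inter_subset_left
  have hKΩ : K ⊆ Ω := by
    rintro x ⟨hx, hxε⟩
    by_contra hxΩ
    have : u x = 0 := hbd x ⟨hx, by rwa [hΩ.interior_eq]⟩
    simp only [Set.mem_ofPred_eq] at hxε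
    linarith
  have hpos : ∀ x ∈ K, 0 < u x := fun x hx => hε.trans_le hx.2
  have hucont : ContinuousOn u K := huΩ.continuousOn.mono hKΩ
  let e : Fin 2 → E2 := fun i => EuclideanSpace.single i 1
  let d : Fin 2 → E2 → ℝ := fun i x => fderiv ℝ u x (e i)
  let dd : Fin 2 → E2 → ℝ := fun i x => fderiv ℝ (d i) x (e i)
  have hd1 : ∀ i, ContDiffOn ℝ 1 (d i) Ω := fun i =>
    (huΩ.fderiv_of_isOpen hΩ (by norm_num)).clm_apply contDiffOn_const
  have hdc : ∀ i, ContinuousOn (d i) K := fun i => (hd1 i).continuousOn.mono hKΩ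
  have hddc : ∀ i, ContinuousOn (dd i) K := fun i =>
    (((hd1 i).continuousOn_fderiv_of_isOpen hΩ le_rfl).clm_apply continuousOn_const).mono hKΩ
  have hφc : ContinuousOn (fun x => (u x - ε) ^ 2 / u x) K :=
    ((hucont.sub continuousOn_const).pow 2).div hucont fun x hx => (hpos x hx).ne'
  have hφ'c : ContinuousOn (fun x => 1 - ε ^ 2 / u x ^ 2) K :=
    continuousOn_const.sub (continuousOn_const.div (hucont.pow 2)
      fun x hx => (pow_pos (hpos x hx) 2).ne')
  -- The divergence of the compactly supported field `cutoff ε (u) ∇u` has integral zero: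
  -- `F` is its `i`-th component and `G` the derivative of `F` in direction `i`.
  have hparts : ∀ i, ∫ x in K, ((1 - ε ^ 2 / u x ^ 2) * d i x ^ 2 +
      (u x - ε) ^ 2 / u x * dd i x) = 0 := by
    intro i
    set F : E2 → ℝ := K.indicator fun x => (u x - ε) ^ 2 / u x * d i x with hF
    set G : E2 → ℝ := K.indicator fun x => (1 - ε ^ 2 / u x ^ 2) * d i x ^ 2 +
      (u x - ε) ^ 2 / u x * dd i x with hG
    have hFi : Integrable F :=
      ((hφc.mul (hdc i)).integrableOn_compact hKc).integrable_indicator hKcl.measurableSet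
    have hGi : Integrable G :=
      (((hφ'c.mul ((hdc i).pow 2)).add (hφc.mul (hddc i))).integrableOn_compact
        hKc).integrable_indicator hKcl.measurableSet
    have hFG : ∀ x, HasLineDerivAt ℝ F (G x) x (e i) := by
      intro x
      by_cases hx : x ∈ K
      · have hxΩ := hKΩ hx
        have hev : F =ᶠ[nhds x] fun z => cutoff ε (u z) * d i z := by
          filter_upwards [hΩ.mem_nhds hxΩ] with z hz
          by_cases hzK : z ∈ K
          · rw [hF, Set.indicator_of_mem hzK, cutoff_of_le hzK.2]
          · have : u z ≤ ε := by
              by_contra h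
              exact hzK ⟨subset_closure hz, (not_le.1 h).le⟩
            rw [hF, Set.indicator_of_notMem hzK, cutoff, if_pos this, zero_mul]
        have h1 : HasFDerivAt u (fderiv ℝ u x) x :=
          ((huΩ.contDiffAt (hΩ.mem_nhds hxΩ)).differentiableAt (by norm_num)).hasFDerivAt
        have h2 : HasFDerivAt (d i) (fderiv ℝ (d i) x) x :=
          (((hd1 i).contDiffAt (hΩ.mem_nhds hxΩ)).differentiableAt (by norm_num)).hasFDerivAt
        have h3 := ((hasDerivAt_cutoff hε hx.2).comp_hasFDerivAt x h1).mul h2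
        have h4 := (h3.congr_of_eventuallyEq hev).hasLineDerivAt (e i)
        have hval : G x = ((cutoff ε ∘ u) x • fderiv ℝ (d i) x +
            d i x • (1 - ε ^ 2 / u x ^ 2) • fderiv ℝ u x) (e i) := by
          rw [hG, Set.indicator_of_mem hx]
          simp [d, dd, cutoff_of_le hx.2]
          ring
        rw [hval]
        exact h4
      · have hev : F =ᶠ[nhds x] fun _ => 0 := by
          filter_upwards [hKcl.isOpen_compl.mem_nhds hx] with z hz
          exact Set.indicator_of_notMem hz _
        have h4 := ((hasFDerivAt_const (𝕜 := ℝ) (0 : ℝ) x).congr_of_eventuallyEq hev).hasLineDerivAt (e i)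
        rw [hG, Set.indicator_of_notMem hx]
        simpa using h4
    have := integral_bilinear_hasLineDerivAt_right_eq_neg_left_of_integrable (μ := volume)
      (f := fun _ : E2 => (1 : ℝ)) (f' := fun _ => 0) (g := F) (g' := G) (v := e i)
      (B := ContinuousLinearMap.mul ℝ ℝ) (by simp) (by simpa using hGi) (by simpa using hFi)
      (fun x _ => by
        simpa using (hasFDerivAt_const (𝕜 := ℝ) (1 : ℝ) x).hasLineDerivAt (e i)) (fun x _ => hFG x)
    simpa [hG, integral_indicator hKcl.measurableSet] using this
  have hintA : IntegrableOn (fun x => (u x - ε) ^ 2 / u x * u x ^ q) K :=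
    (hφc.mul (hucont.rpow_const fun x hx => Or.inl (hpos x hx).ne')).integrableOn_compact hKc
  refine ⟨hintA, ?_⟩
  have hgradint := integrableOn_gradient_sq hΩ hb hu
  have hintB : IntegrableOn (fun x => (1 - ε ^ 2 / u x ^ 2) * ‖gradient u x‖ ^ 2) K := by
    simp only [norm_gradient_sq]
    exact (hφ'c.mul (continuousOn_finsetSum _ fun i _ => (hdc i).pow 2)).integrableOn_compact hKc
  have hid : ∫ x in K, (u x - ε) ^ 2 / u x * u x ^ q =
      ∫ x in K, (1 - ε ^ 2 / u x ^ 2) * ‖gradient u x‖ ^ 2 := by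
    rw [← sub_eq_zero, ← integral_sub hintA hintB, ← neg_eq_zero, ← integral_neg]
    have hsum : ∫ x in K, ∑ i, ((1 - ε ^ 2 / u x ^ 2) * d i x ^ 2 +
      (u x - ε) ^ 2 / u x * dd i x) = 0 := by
      rw [integral_finsetSum]
      · simp [hparts]
      · exact fun i _ => ((hφ'c.mul ((hdc i).pow 2)).add (hφc.mul (hddc i))).integrableOn_compact hKc
    rw [← hsum]
    refine setIntegral_congr_fun hKcl.measurableSet fun x hx => ?_
    beta_reduce
    rw [← hpde x (hKΩ hx), posLap_eq hΩ huΩ (hKΩ hx), norm_gradient_sq, Finset.sum_add_distrib,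
      ← Finset.mul_sum, ← Finset.mul_sum]
    ring
  rw [hid]
  calc _ ≤ ∫ x in K, ‖gradient u x‖ ^ 2 := by
        refine setIntegral_mono_on hintB (hgradint.mono_set hKΩ) hKcl.measurableSet fun x hx => ?_
        refine mul_le_of_le_one_left (by positivity) ?_
        have := hpos x hx
        have : 0 ≤ ε ^ 2 / u x ^ 2 := by positivity
        linarith
    _ ≤ _ := setIntegral_mono_set hgradint (ae_of_all _ fun x => by positivity)
        hKΩ.eventuallyLE

/-! ### The limit profile -/

lemma integrable_profile : Integrable fun z : E2 => ((1 + ‖z‖ ^ 2) ^ 2)⁻¹ := by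
  have := integrable_rpow_neg_one_add_norm_sq (E := E2) (μ := volume) (r := 4) (by simp; norm_num)
  refine this.congr (ae_of_all _ fun z => ?_)
  beta_reduce
  rw [show (-4 / 2 : ℝ) = -(2 : ℕ) by norm_num, Real.rpow_neg (by positivity), Real.rpow_natCast]

/-- In polar coordinates this is `2π ∫₀^∞ r (1 + r²)⁻² dr`. -/
lemma integral_profile : ∫ z : E2, ((1 + ‖z‖ ^ 2) ^ 2)⁻¹ = π := by
  rw [integral_fun_norm_addHaar volume (fun r : ℝ => ((1 + r ^ 2) ^ 2)⁻¹)]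
  have hder : ∀ x ∈ Set.Ici (0 : ℝ), HasDerivAt (fun r : ℝ => -(1 / 2) * (1 + r ^ 2)⁻¹)
      (x * ((1 + x ^ 2) ^ 2)⁻¹) x := by
    intro x _
    have hx : 1 + x ^ 2 ≠ 0 := by positivity
    refine (((((hasDerivAt_id' x).pow 2).const_add 1).inv hx).const_mul
      (-(1 / 2) : ℝ)).congr_deriv ?_
    simp only [Pi.pow_apply]
    push_cast
    field_simp
  have hlim : Tendsto (fun r : ℝ => -(1 / 2) * (1 + r ^ 2)⁻¹) atTop (nhds 0) := by
    have : Tendsto (fun r : ℝ => 1 + r ^ 2) atTop atTop :=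
      tendsto_atTop_add_const_left _ _ (tendsto_pow_atTop two_ne_zero)
    simpa using (tendsto_inv_atTop_zero.comp this).const_mul (-(1 / 2) : ℝ)
  have hint := integral_Ioi_of_hasDerivAt_of_nonneg' hder
    (fun x hx => by have : 0 < x := hx; positivity) hlim
  have : ∫ x in Set.Ioi (0 : ℝ), x ^ (Module.finrank ℝ E2 - 1) • ((1 + x ^ 2) ^ 2)⁻¹ = 1 / 2 := by
    simpa using hint
  rw [this, Measure.real, EuclideanSpace.volume_ball_fin_two]
  simp [ENNReal.toReal_ofReal Real.pi_nonneg]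
  ring


/-- A quantitative form of `(1 - 2τ/p)^p → e^{-2τ}`. -/
lemma exp_le_rpow {t T p δ : ℝ} (hp : 0 < p) (ht : |t| ≤ T) (h1 : 4 * T ≤ p)
    (h2 : 8 * T ^ 2 ≤ δ * p) : Real.exp (-(2 * t) - δ) ≤ (1 - 2 * t / p) ^ p := by
  obtain ⟨x, hx⟩ : ∃ x, x = 2 * t / p := ⟨_, rfl⟩
  have hxt : x * p = 2 * t := by rw [hx]; field_simp
  have hxabs : |x| ≤ 1 / 2 := by
    rw [hx, abs_div, abs_of_pos hp, abs_mul, abs_two, div_le_iff₀ hp]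
    linarith
  have ⟨hxl, hxu⟩ := abs_le.1 hxabs
  have hw : 0 < 1 - x := by linarith
  rw [← hx, Real.rpow_def_of_pos hw, Real.exp_le_exp]
  have hlog := Real.one_sub_inv_le_log_of_pos hw
  have hinv : (1 - x)⁻¹ ≤ 1 + x + 2 * x ^ 2 := by
    rw [inv_le_iff_one_le_mul₀ hw]
    nlinarith [mul_nonneg (sq_nonneg x) (by linarith : 0 ≤ 1 - 2 * x)]
  have hlow : (-x - 2 * x ^ 2) * p ≤ Real.log (1 - x) * p := by gcongr; linarith
  have hx2 : 2 * x ^ 2 * p ≤ δ := by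
    have htT : t ^ 2 ≤ T ^ 2 := sq_le_sq' (by linarith [(abs_le.1 ht).1]) (abs_le.1 ht).2
    have : 2 * x ^ 2 * p * p ≤ δ * p := by
      calc 2 * x ^ 2 * p * p = 2 * (x * p) ^ 2 := by ring
        _ = 8 * t ^ 2 := by rw [hxt]; ring
        _ ≤ _ := by linarith
    exact le_of_mul_le_mul_right this hp
  nlinarith

/-- With `w = 1 - 2τ/p`, the function `w ^ p` is eventually at least `e^{-δ}` times the profile
`e^{-2 τlim} = (1 + |z|²)⁻²`, uniformly on a ball. -/
lemma eventually_profile {p : ℕ → ℝ} (hp : Tendsto p atTop atTop) {τ : ℕ → E2 → ℝ} {R : ℝ}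
    (hconv : TendstoUniformlyOn τ (fun z => Real.log (1 + ‖z‖ ^ 2)) atTop (closedBall 0 R))
    {δ : ℝ} (hδ : 0 < δ) :
    ∀ᶠ n in atTop, ∀ z ∈ closedBall (0 : E2) R, 1 - δ ≤ 1 - 2 * τ n z / p n ∧
      Real.exp (-δ) * ((1 + ‖z‖ ^ 2) ^ 2)⁻¹ ≤ (1 - 2 * τ n z / p n) ^ p n := by
  set T := Real.log (1 + R ^ 2) + 1 with hT
  have hT0 : 0 < T := by
    have := Real.log_nonneg (show 1 ≤ 1 + R ^ 2 by nlinarith [sq_nonneg R])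
    linarith
  filter_upwards [Metric.tendstoUniformlyOn_iff.1 hconv 1 one_pos,
    Metric.tendstoUniformlyOn_iff.1 hconv (δ / 4) (by positivity),
    hp.eventually_ge_atTop (4 * T), hp.eventually_ge_atTop (8 * T ^ 2 / (δ / 2)),
    hp.eventually_ge_atTop (2 * T / δ)] with n hn1 hn2 hp1 hp2 hp3 z hz
  have hpn : 0 < p n := by linarith
  have hzR : ‖z‖ ≤ R := by simpa using hz
  have hlog0 : 0 ≤ Real.log (1 + ‖z‖ ^ 2) :=
    Real.log_nonneg (by nlinarith [sq_nonneg ‖z‖])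
  have hlogR : Real.log (1 + ‖z‖ ^ 2) ≤ Real.log (1 + R ^ 2) :=
    Real.log_le_log (by positivity) (by gcongr)
  have h1 := abs_lt.1 (by simpa [Real.dist_eq] using hn1 z hz)
  have h2 := abs_lt.1 (by simpa [Real.dist_eq] using hn2 z hz)
  have habs : |τ n z| ≤ T := abs_le.2 ⟨by linarith, by linarith⟩
  constructor
  · have : 2 * τ n z / p n ≤ δ := by
      rw [div_le_iff₀ hpn]
      rw [div_le_iff₀ hδ] at hp3
      linarith [(abs_le.1 habs).2]
    linarith
  · rw [div_le_iff₀ (by positivity)] at hp2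
    refine le_trans ?_ (exp_le_rpow hpn habs hp1 (δ := δ / 2) (by linarith))
    have : ((1 + ‖z‖ ^ 2) ^ 2)⁻¹ = Real.exp (-(2 * Real.log (1 + ‖z‖ ^ 2))) := by
      rw [Real.exp_neg, two_mul, Real.exp_add, Real.exp_log (by positivity), sq]
    rw [this, ← Real.exp_add, Real.exp_le_exp]
    linarith

/-! ### The rescaled estimate -/

/-- If `u` is positive on the ball of radius `R` in rescaled coordinates, that ball lies in `Ω`: it
is connected, meets `Ω`, and misses the frontier, where `u` is zero. -/
lemma rescaled_ball_subset {Ω : Set E2} (hΩ : IsOpen Ω) {u : E2 → ℝ}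
    (hbd : ∀ x ∈ frontier Ω, u x = 0) {y : E2} (hy : y ∈ Ω) {μ R : ℝ} (hR : 0 ≤ R)
    (hpos : ∀ z ∈ closedBall (0 : E2) R, 0 < u (y + μ • z)) :
    ∀ z ∈ closedBall (0 : E2) R, y + μ • z ∈ Ω := by
  set S : Set E2 := (fun z : E2 => y + μ • z) '' closedBall 0 R
  have hS : IsPreconnected S :=
    (convex_closedBall (0 : E2) R).isPreconnected.image _ (by fun_prop)
  have hdisj : S ∩ frontier Ω = ∅ := by
    rw [Set.eq_empty_iff_forall_notMem]
    rintro _ ⟨⟨z, hz, rfl⟩, hf⟩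
    exact (hpos z hz).ne' (hbd _ hf)
  have hsub : S ⊆ Ω := by
    refine hS.subset_left_of_subset_union hΩ isClosed_closure.isOpen_compl
      (disjoint_compl_right.mono_right (Set.compl_subset_compl.2 subset_closure)) ?_
      ⟨y, ⟨0, by simpa using hR, by simp⟩, hy⟩
    intro x hx
    by_contra h
    rw [Set.mem_union, not_or, Set.mem_compl_iff, not_not] at h
    have : x ∈ S ∩ frontier Ω := ⟨hx, h.2, by rw [hΩ.interior_eq]; exact h.1⟩
    simp [hdisj] at this
  exact fun z hz => hsub ⟨z, hz, rfl⟩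

/-- The energy estimate for a single solution. In the variable `x = y + μ z` the Jacobian `μ²`
combines with `p M ^ p` to `8 M`; the factor `M (1 - δ) - 2 δ` bounds `cutoff δ (u)` from below, and
`w ^ p` is bounded below by the profile. -/
lemma energy_ge {Ω : Set E2} (hΩ : IsOpen Ω) (hb : Bornology.IsBounded Ω)
    {u : E2 → ℝ} (hu : ContDiffOn ℝ 2 u (closure Ω)) (hbd : ∀ x ∈ frontier Ω, u x = 0)
    {p M μ δ R : ℝ} {y : E2} {w : E2 → ℝ}
    (hpde : ∀ x ∈ Ω, posLap u x = u x ^ p) (hp : 0 < p) (hM : 0 < M) (hμ0 : 0 < μ)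
    (hμ : μ ^ 2 * p * M ^ (p - 1) = 8) (hδ : 0 < δ) (hδM : 0 < M * (1 - δ) - 2 * δ)
    (hR : 0 ≤ R) (hy : y ∈ Ω)
    (huw : ∀ z, u (y + μ • z) = M * w z)
    (hw : ∀ z ∈ closedBall (0 : E2) R, 1 - δ ≤ w z ∧
      Real.exp (-δ) * ((1 + ‖z‖ ^ 2) ^ 2)⁻¹ ≤ w z ^ p) :
    8 * M * (M * (1 - δ) - 2 * δ) * Real.exp (-δ) *
      (∫ z in closedBall (0 : E2) R, ((1 + ‖z‖ ^ 2) ^ 2)⁻¹) ≤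
      p * ∫ x in Ω, ‖gradient u x‖ ^ 2 := by
  have hge : ∀ z ∈ closedBall (0 : E2) R, M * (1 - δ) ≤ u (y + μ • z) := fun z hz => by
    rw [huw]; exact mul_le_mul_of_nonneg_left (hw z hz).1 hM.le
  have hsub := rescaled_ball_subset hΩ hbd hy hR (μ := μ) fun z hz => by
    linarith [hge z hz]
  obtain ⟨hint, hle⟩ := setIntegral_le_energy hΩ hb hu hbd hpde hδ
  have hKm : MeasurableSet (closure Ω ∩ {x | δ ≤ u x}) :=
    (hu.continuousOn.preimage_isClosed_of_isClosed isClosed_closure isClosed_Ici).measurableSet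
  set K := closure Ω ∩ {x | δ ≤ u x} with hK
  set g : E2 → ℝ := K.indicator fun x => (u x - δ) ^ 2 / u x * u x ^ p with hg
  have hgi : Integrable g := hint.integrable_indicator hKm
  have hcv : ∫ x in K, (u x - δ) ^ 2 / u x * u x ^ p = μ ^ 2 * ∫ z, g (y + μ • z) := by
    rw [← integral_indicator hKm,
      Measure.integral_comp_smul volume (fun z => g (y + z)) μ,
      integral_add_left_eq_self g y]
    have hμ2 : μ ^ 2 ≠ 0 := by positivity
    simp [mul_inv_cancel_left₀ hμ2, hg]
  have hgi' : Integrable fun z => g (y + μ • z) :=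
    (hgi.comp_add_left y).comp_smul hμ0.ne'
  set c := (M * (1 - δ) - 2 * δ) * M ^ p * Real.exp (-δ) with hc
  have hlow : c * (∫ z in closedBall (0 : E2) R, ((1 + ‖z‖ ^ 2) ^ 2)⁻¹) ≤
      ∫ z, g (y + μ • z) := by
    rw [← integral_const_mul, ← integral_indicator measurableSet_closedBall]
    refine integral_mono ((integrable_profile.const_mul c).indicator measurableSet_closedBall)
      hgi' fun z => ?_
    by_cases hz : z ∈ closedBall (0 : E2) R
    · have h1 := hge z hz
      have hu0 : 0 < u (y + μ • z) := by linarith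
      have hwz : 0 ≤ w z := by
        have := huw z
        by_contra h
        nlinarith
      have hmem : y + μ • z ∈ K :=
        ⟨subset_closure (hsub z hz), by simp only [Set.mem_ofPred_eq]; linarith⟩
      rw [Set.indicator_of_mem hz, hg, Set.indicator_of_mem hmem]
      have h2 : M * (1 - δ) - 2 * δ ≤ (u (y + μ • z) - δ) ^ 2 / u (y + μ • z) := by
        rw [le_div_iff₀ hu0]
        nlinarith [mul_nonneg (sub_nonneg.2 h1) hu0.le, sq_nonneg δ]
      have h3 : M ^ p * (Real.exp (-δ) * ((1 + ‖z‖ ^ 2) ^ 2)⁻¹) ≤ u (y + μ • z) ^ p := by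
        rw [huw, Real.mul_rpow hM.le hwz]
        gcongr
        exact (hw z hz).2
      calc c * ((1 + ‖z‖ ^ 2) ^ 2)⁻¹ = (M * (1 - δ) - 2 * δ) *
            (M ^ p * (Real.exp (-δ) * ((1 + ‖z‖ ^ 2) ^ 2)⁻¹)) := by rw [hc]; ring
        _ ≤ _ := mul_le_mul h2 h3 (by positivity) (by positivity)
    · rw [Set.indicator_of_notMem hz]
      refine Set.indicator_nonneg (fun x hx => ?_) _
      have : 0 < u x := hδ.trans_le hx.2
      positivity
  have hMp : M ^ p = M ^ (p - 1) * M := by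
    rw [← Real.rpow_add_one hM.ne', sub_add_cancel]
  set J := ∫ z in closedBall (0 : E2) R, ((1 + ‖z‖ ^ 2) ^ 2)⁻¹
  calc 8 * M * (M * (1 - δ) - 2 * δ) * Real.exp (-δ) * J = p * (μ ^ 2 * (c * J)) := by
        rw [hc, hMp, ← hμ]; ring
    _ ≤ p * (μ ^ 2 * ∫ z, g (y + μ • z)) := by gcongr
    _ ≤ _ := by rw [← hcv]; gcongr

/-- the limit profile has finite mass and the energy lower bound
`8πm² ≤ liminf p∫_Ω |∇u_p|²` holds. -/
theorem energy_lower_bound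
    (Ω : Set E2) (hΩopen : IsOpen Ω) (hΩbdd : Bornology.IsBounded Ω)
    (p : ℕ → ℝ) (hp : Tendsto p atTop atTop)
    (u : ℕ → E2 → ℝ) (y : ℕ → E2) (M μ : ℕ → ℝ) (m C : ℝ)
    (τ : ℕ → E2 → ℝ) (τlim : E2 → ℝ)
    (hτlim : τlim = fun z => Real.log (1 + ‖z‖ ^ 2))
    (hconv : ∀ K : Set E2, IsCompact K → TendstoUniformlyOn τ τlim atTop K)
    (hu : ∀ n, ContDiffOn ℝ 2 (u n) (closure Ω))
    (hunonneg : ∀ n, ∀ x ∈ Ω, 0 ≤ u n x)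
    (hubd : ∀ n, ∀ x ∈ frontier Ω, u n x = 0)
    (hpde : ∀ n, ∀ x ∈ Ω, posLap (u n) x = u n x ^ p n)
    (hy : ∀ n, y n ∈ Ω)
    (hrescale : ∀ n, ∀ z : E2, u n (y n + μ n • z) = M n * (1 - 2 * τ n z / p n))
    (hμpos : ∀ n, 0 < μ n)
    (hμ : ∀ n, μ n ^ 2 * p n * M n ^ (p n - 1) = 8)
    (hMlim : Tendsto M atTop (nhds m)) (hm : 0 < m)
    (henergy : ∀ n, p n * ∫ x in Ω, ‖gradient (u n) x‖ ^ 2 ≤ C) :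
    Integrable (fun z : E2 => Real.exp (-(2 * τlim z))) ∧
    8 * Real.pi * m ^ 2 ≤
      Filter.liminf (fun n => p n * ∫ x in Ω, ‖gradient (u n) x‖ ^ 2) atTop := by
  have hexp : (fun z : E2 => Real.exp (-(2 * τlim z))) = fun z => ((1 + ‖z‖ ^ 2) ^ 2)⁻¹ := by
    funext z
    rw [hτlim, Real.exp_neg, two_mul, Real.exp_add, Real.exp_log (by positivity), ← sq]
  refine ⟨hexp ▸ integrable_profile, le_of_forall_lt fun c hc => ?_⟩
  have hJ : Tendsto (fun R : ℝ => 8 * m ^ 2 * ∫ z in closedBall (0 : E2) R,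
      ((1 + ‖z‖ ^ 2) ^ 2)⁻¹) atTop (nhds (8 * m ^ 2 * π)) := by
    rw [← integral_profile]
    exact ((aecover_closedBall tendsto_id).integral_tendsto_of_countably_generated
      integrable_profile).const_mul _
  obtain ⟨c', hcc', hc'⟩ := exists_between hc
  obtain ⟨R, hR, hR0⟩ := ((hJ.eventually_const_lt (u := c') (by linarith)).and
    (eventually_ge_atTop 0)).exists
  set J := ∫ z in closedBall (0 : E2) R, ((1 + ‖z‖ ^ 2) ^ 2)⁻¹
  obtain ⟨δ, ⟨hδc, hδm⟩, hδ⟩ : ∃ δ : ℝ, (c' < 8 * m * (m * (1 - δ) - 2 * δ) * Real.exp (-δ) * J ∧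
      0 < m * (1 - δ) - 2 * δ) ∧ 0 < δ := by
    have h1 : Tendsto (fun δ : ℝ => 8 * m * (m * (1 - δ) - 2 * δ) * Real.exp (-δ) * J)
        (nhds 0) (nhds (8 * m ^ 2 * J)) := by
      refine Continuous.tendsto' (by fun_prop) _ _ ?_
      rw [neg_zero, Real.exp_zero]
      ring
    have h2 : Tendsto (fun δ : ℝ => m * (1 - δ) - 2 * δ) (nhds 0) (nhds m) :=
      Continuous.tendsto' (by fun_prop) _ _ (by simp)
    exact ((((h1.eventually_const_lt hR).and (h2.eventually_const_lt hm)).filter_mono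
      nhdsWithin_le_nhds).and (self_mem_nhdsWithin (s := Set.Ioi (0 : ℝ)))).exists
  have hM1 : Tendsto (fun n => 8 * M n * (M n * (1 - δ) - 2 * δ) * Real.exp (-δ) * J) atTop
      (nhds (8 * m * (m * (1 - δ) - 2 * δ) * Real.exp (-δ) * J)) :=
    (((hMlim.const_mul 8).mul ((hMlim.mul_const _).sub_const _)).mul_const _).mul_const _
  have hM2 : Tendsto (fun n => M n * (1 - δ) - 2 * δ) atTop (nhds (m * (1 - δ) - 2 * δ)) :=
    (hMlim.mul_const _).sub_const _
  refine hcc'.trans_le (le_liminf_of_le (IsBoundedUnder.isCoboundedUnder_ge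
    (isBoundedUnder_of ⟨C, henergy⟩)) ?_)
  filter_upwards [hM1.eventually_const_lt hδc, hM2.eventually_const_lt hδm,
    hMlim.eventually_const_lt hm, hp.eventually_gt_atTop 0,
    eventually_profile hp (hτlim ▸ hconv _ (isCompact_closedBall 0 R)) hδ] with n h1 h2 h3 h4 h5
  exact h1.le.trans (energy_ge hΩopen hΩbdd (hu n) (hubd n) (hpde n) h4 h3 (hμpos n) (hμ n) hδ h2
    hR0 (hy n) (hrescale n) h5)
end
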